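/- arXiv:1710.03635 — 8 statements merged into one kernel-verified Lean document; each statement's English description precedes it below -/
import Mathlib

section
/- Let L ⊆ Λ be an extension of fields such that L is algebraically closed in Λ, and let D be a finite field extension of L. If the tensor product D ⊗_L Λ is a field and is a Galois extension of Λ, then D is a Galois extension of L. -/
open scoped TensorProduct

attribute [local instance] Algebra.TensorProduct.rightAlgebra

/-!
Let `Δ` be the field `D ⊗[L] Λ`. If `x : Δ` is separable over `L`, then its minimal polynomial over
`Λ` has coefficients in `Λ` that are polynomial expressions in conjugates of `x`, hence separable
over `L`, hence in `L`; so it is also the minimal polynomial of `x` over `L`. Two things follow for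
the separable closure `E` of `L` in `Δ`: it is normal over `L`, since `Δ` is normal over `Λ`, and it
is linearly disjoint from `Λ` over `L`. The field `D` is itself linearly disjoint from `Λ`, so it
inherits separability from `Δ / Λ`, and `D ⊆ E`. As `D` already spans `Δ` over `Λ`, an element of
`E` outside `D` would contradict the linear disjointness of `E` and `Λ`; thus `D = E`.
-/

open Polynomial

theorem linearIndependent_pow_iff_aeval {R A : Type*} [CommRing R] [Ring A] [Algebra R A]
    (x : A) (n : ℕ) :
    LinearIndependent R (fun i : Fin n ↦ x ^ (i : ℕ)) ↔
      ∀ p : R[X], p.degree < n → aeval x p = 0 → p = 0 := by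
  let evalAt : degreeLT R n →ₗ[R] A := (aeval x).toLinearMap.domRestrict (degreeLT R n)
  have hpow : (fun i : Fin n ↦ x ^ (i : ℕ)) = evalAt ∘ degreeLT.basis R n := by
    ext i
    simp [evalAt]
  have hker : LinearIndependent R (evalAt ∘ degreeLT.basis R n) ↔ evalAt.ker = ⊥ := by
    refine ⟨fun h ↦ ?_, fun h ↦ (degreeLT.basis R n).linearIndependent.map' _ h⟩
    simpa only [(degreeLT.basis R n).span_eq, top_disjoint] using Submodule.range_ker_disjoint h
  rw [hpow, hker, LinearMap.ker_eq_bot']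
  simp [evalAt, Subtype.forall, mem_degreeLT]

theorem isSeparable_coeff_of_dvd {L Λ : Type*} [Field L] [Field Λ] [Algebra L Λ]
    {p : L[X]} {q : Λ[X]} (hp : p.Separable) (hq : q.Monic)
    (hqp : q ∣ p.map (algebraMap L Λ)) (n : ℕ) : IsSeparable L (q.coeff n) := by
  let Ω := AlgebraicClosure Λ
  have hroots : ∀ r ∈ (q.map (algebraMap Λ Ω)).roots,
      r ∈ (algebraMap (separableClosure L Ω) Ω).range := fun r hr ↦ by
    have hrp : aeval r p = 0 := by
      rw [← aeval_map_algebraMap Λ]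
      exact aeval_eq_zero_of_dvd_aeval_eq_zero hqp (mem_aroots'.1 hr).2
    exact ⟨⟨r, hp.of_dvd (minpoly.dvd L r hrp)⟩, rfl⟩
  have hlift := (IsAlgClosed.splits (q.map (algebraMap Λ Ω))).mem_lift_of_roots_mem_range
    (hq.map _) _ hroots
  obtain ⟨c, hc⟩ := (lifts_iff_coeff_lifts _).1 hlift n
  rw [coeff_map] at hc
  rw [← mem_separableClosure_iff, ← map_mem_separableClosure_iff (IsScalarTower.toAlgHom L Λ Ω)]
  exact hc ▸ c.2

section Tower

variable {L Λ Δ : Type*} [Field L] [Field Λ] [Field Δ] [Algebra L Λ] [Algebra Λ Δ] [Algebra L Δ]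
  [IsScalarTower L Λ Δ]

theorem minpoly_eq_map_of_isSeparable (hΛ : separableClosure L Λ = ⊥) {x : Δ}
    (hx : IsSeparable L x) : minpoly Λ x = (minpoly L x).map (algebraMap L Λ) := by
  have hmonic : (minpoly Λ x).Monic := minpoly.monic hx.isIntegral.tower_top
  have hdvd := minpoly.dvd_map_of_isScalarTower L Λ x
  have hlift : minpoly Λ x ∈ lifts (algebraMap L Λ) := (lifts_iff_coeff_lifts _).2 fun n ↦
    IntermediateField.mem_bot.1 (hΛ ▸ isSeparable_coeff_of_dvd hx hmonic hdvd n)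
  obtain ⟨q, hq⟩ := (mem_lifts _).1 hlift
  have hqx : aeval x q = 0 := by rw [← aeval_map_algebraMap Λ, hq, minpoly.aeval]
  refine eq_of_monic_of_associated hmonic ((minpoly.monic hx.isIntegral).map _)
    (associated_of_dvd_dvd hdvd ?_)
  exact hq ▸ Polynomial.map_dvd _ (minpoly.dvd L x hqx)

theorem isGalois_separableClosure [Normal Λ Δ] (hΛ : separableClosure L Λ = ⊥) :
    IsGalois L (separableClosure L Δ) where
  to_normal := normal_iff.2 fun x ↦ by
    refine ⟨Algebra.IsIntegral.isIntegral x, IntermediateField.splits_of_splits ?_ ?_⟩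
    · have hsplits := Normal.splits (F := Λ) inferInstance (x : Δ)
      rwa [minpoly_eq_map_of_isSeparable hΛ x.2, map_map, ← IsScalarTower.algebraMap_eq,
        ← IntermediateField.minpoly_eq] at hsplits
    · intro y hy
      exact (Algebra.IsSeparable.isSeparable L x).of_dvd
        (minpoly.dvd L y (aeval_eq_zero_of_mem_rootSet hy))

theorem minpoly_eq_map_of_linearDisjoint {K : IntermediateField L Δ} (h : K.LinearDisjoint Λ)
    {x : K} (hx : IsIntegral Λ (x : Δ)) :
    minpoly Λ (x : Δ) = (minpoly L x).map (algebraMap L Λ) := by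
  have hdeg : (minpoly Λ (x : Δ)).degree < ((minpoly Λ (x : Δ)).natDegree + 1 : ℕ) :=
    (natDegree_lt_iff_degree_lt (minpoly.ne_zero hx)).1 (Nat.lt_succ_self _)
  have hdep : ¬ LinearIndependent Λ fun i : Fin ((minpoly Λ (x : Δ)).natDegree + 1) ↦
      (x : Δ) ^ (i : ℕ) := fun hind ↦
    minpoly.ne_zero hx ((linearIndependent_pow_iff_aeval _ _).1 hind _ hdeg (minpoly.aeval _ _))
  obtain ⟨p, hpdeg, hpx, hp⟩ : ∃ p : L[X],
      p.degree < ((minpoly Λ (x : Δ)).natDegree + 1 : ℕ) ∧ aeval x p = 0 ∧ p ≠ 0 := by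
    by_contra! hind
    exact hdep (h.linearIndependent_left ((linearIndependent_pow_iff_aeval _ _).2 hind))
  have hxL : IsIntegral L x := IsAlgebraic.isIntegral ⟨p, hp, hpx⟩
  refine (eq_of_monic_of_dvd_of_natDegree_le (minpoly.monic hx) ((minpoly.monic hxL).map _)
    ?_ ?_).symm
  · rw [IntermediateField.minpoly_eq]
    exact minpoly.dvd_map_of_isScalarTower L Λ (x : Δ)
  · rw [natDegree_map]
    exact (natDegree_le_natDegree (minpoly.degree_le_of_ne_zero L x hp hpx)).trans
      (Nat.lt_succ_iff.1 ((natDegree_lt_iff_degree_lt hp).2 hpdeg))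

theorem isSeparable_of_linearDisjoint [Algebra.IsSeparable Λ Δ] {K : IntermediateField L Δ}
    (h : K.LinearDisjoint Λ) : Algebra.IsSeparable L K where
  isSeparable' x := by
    have hx : (minpoly Λ (x : Δ)).Separable := Algebra.IsSeparable.isSeparable Λ (x : Δ)
    rwa [minpoly_eq_map_of_linearDisjoint h (Algebra.IsIntegral.isIntegral _), separable_map] at hx

theorem linearDisjoint_of_isSeparable_of_finite (hΛ : separableClosure L Λ = ⊥)
    (K : IntermediateField L Δ) [FiniteDimensional L K] [Algebra.IsSeparable L K] :
    K.LinearDisjoint Λ := by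
  let pb := Field.powerBasisOfFiniteOfSeparable L K
  have hdeg : pb.dim = (minpoly Λ (pb.gen : Δ)).natDegree := by
    have hgen : IsSeparable L (pb.gen : Δ) :=
      IntermediateField.isSeparable_of_mem_isSeparable L Δ pb.gen.2
    rw [minpoly_eq_map_of_isSeparable hΛ hgen, natDegree_map, ← IntermediateField.minpoly_eq,
      pb.natDegree_minpoly]
  refine .of_basis_left pb.basis ?_
  convert (linearIndependent_pow (K := Λ) (pb.gen : Δ)).comp _ (finCongr hdeg).injective using 1
  ext i
  simp

theorem linearDisjoint_of_isSeparable (hΛ : separableClosure L Λ = ⊥)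
    (K : IntermediateField L Δ) [Algebra.IsSeparable L K] : K.LinearDisjoint Λ := by
  refine Subalgebra.LinearDisjoint.of_linearDisjoint_finite_left _ _ fun A hA _ ↦ ?_
  let F : IntermediateField L Δ := Algebra.IsAlgebraic.toIntermediateField A
  have : FiniteDimensional L F := ‹Module.Finite L A›
  have : Algebra.IsSeparable L F :=
    Algebra.IsSeparable.of_algHom L K (IntermediateField.inclusion (E := F) (F := K) hA)
  exact linearDisjoint_of_isSeparable_of_finite hΛ F

theorem mem_span_of_linearDisjoint {E : IntermediateField L Δ} (h : E.LinearDisjoint Λ)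
    {s : Set E} {a : E} (ha : (a : Δ) ∈ Submodule.span Λ ((↑) '' s : Set Δ)) :
    a ∈ Submodule.span L s := by
  by_contra has
  obtain ⟨b, -, hspan, hind⟩ := exists_linearIndependent L s
  have hoption : LinearIndependent L fun o : Option b ↦ o.casesOn' a Subtype.val :=
    linearIndependent_option'.2 ⟨hind, by rwa [Subtype.range_coe, hspan]⟩
  refine (linearIndependent_option.1 (h.linearIndependent_left hoption)).2
    (Submodule.span_le.2 ?_ ha)
  rintro _ ⟨x, hx, rfl⟩
  have hx' : x ∈ Submodule.span L b := hspan ▸ Submodule.subset_span hx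
  have hmap := Submodule.mem_map_of_mem (f := E.val.toLinearMap) hx'
  rw [Submodule.map_span] at hmap
  refine Submodule.span_mono ?_ (Submodule.span_le_restrictScalars L Λ _ hmap)
  rintro _ ⟨y, hy, rfl⟩
  exact ⟨⟨y, hy⟩, rfl⟩

theorem eq_of_le_of_linearDisjoint {K E : IntermediateField L Δ} (hKE : K ≤ E)
    (hE : E.LinearDisjoint Λ) (hK : Submodule.span Λ (K : Set Δ) = ⊤) : K = E := by
  refine hKE.antisymm fun a ha ↦ ?_
  have himage : ((↑) '' {x : E | (x : Δ) ∈ K} : Set Δ) = K :=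
    Subtype.coe_image_of_subset hKE
  have haspan : (⟨a, ha⟩ : E) ∈ Submodule.span L {x : E | (x : Δ) ∈ K} :=
    mem_span_of_linearDisjoint hE (by rw [himage, hK]; trivial)
  exact Submodule.span_le (p := K.toSubalgebra.toSubmodule.comap E.val.toLinearMap).2
    (fun x hx ↦ hx) haspan

theorem isGalois_of_linearDisjoint [IsGalois Λ Δ] (hΛ : separableClosure L Λ = ⊥)
    {K : IntermediateField L Δ} (hdisj : K.LinearDisjoint Λ)
    (hspan : Submodule.span Λ (K : Set Δ) = ⊤) : IsGalois L K := by
  have : Algebra.IsSeparable L K := isSeparable_of_linearDisjoint hdisj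
  have hK : K = separableClosure L Δ := eq_of_le_of_linearDisjoint (le_separableClosure L Δ K)
    (linearDisjoint_of_isSeparable hΛ _) hspan
  exact hK ▸ isGalois_separableClosure hΛ

variable {D : Type*} [Field D] [Algebra L D] {f : D →ₐ[L] Δ}

theorem linearDisjoint_fieldRange_of_isBaseChange (hf : IsBaseChange Λ f.toLinearMap) :
    f.fieldRange.LinearDisjoint Λ := by
  let b := Module.Basis.ofVectorSpace L D
  refine .of_basis_left (b.map (AlgEquiv.ofInjectiveField f).toLinearEquiv) ?_
  have hb : f ∘ b = hf.basis b := funext fun i ↦ (hf.basis_apply b i).symm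
  have hind : LinearIndependent Λ (f ∘ b) := hb ▸ (hf.basis b).linearIndependent
  exact hind

theorem span_fieldRange_of_isBaseChange (hf : IsBaseChange Λ f.toLinearMap) :
    Submodule.span Λ (f.fieldRange : Set Δ) = ⊤ := by
  let b := Module.Basis.ofVectorSpace L D
  refine eq_top_mono (Submodule.span_mono ?_) (hf.basis b).span_eq
  rintro _ ⟨i, rfl⟩
  exact ⟨b i, (hf.basis_apply b i).symm⟩

end Tower

theorem descent_galois_of_tensor_galois_general {L Λ D Δ : Type*} [Field L] [Field Λ] [Field D]
    [Field Δ] [Algebra L Λ] [Algebra L D] [Algebra Λ Δ] [IsGalois Λ Δ]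
    (hΛ : separableClosure L Λ = ⊥) (iso : (D ⊗[L] Λ) ≃ₐ[Λ] Δ) :
    IsGalois L D := by
  algebraize [(algebraMap Λ Δ).comp (algebraMap L Λ)]
  let e : (Λ ⊗[L] D) ≃ₐ[Λ] Δ := (Algebra.TensorProduct.commRight L Λ D).trans iso
  let f : D →ₐ[L] Δ := (e.toAlgHom.restrictScalars L).comp Algebra.TensorProduct.includeRight
  have hf : IsBaseChange Λ f.toLinearMap := .of_equiv e.toLinearEquiv fun _ ↦ rfl
  have : IsGalois L f.fieldRange := isGalois_of_linearDisjoint hΛ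
    (linearDisjoint_fieldRange_of_isBaseChange hf) (span_fieldRange_of_isBaseChange hf)
  let toRange : D ≃ₐ[L] f.fieldRange := AlgEquiv.ofInjectiveField f
  exact .of_algEquiv toRange.symm

/-- If `L` is algebraically closed in `Λ`, `D/L` is a finite field extension, and
`D ⊗_L Λ` is a field (expressed by an isomorphism with a field `Δ`) which is Galois
over `Λ`, then `D/L` is Galois. -/
theorem descent_galois_of_tensor_galois
    (L Λ D : Type) [Field L] [Field Λ] [Field D]
    [Algebra L Λ] [Algebra L D] [FiniteDimensional L D]
    (halg : ∀ x : Λ, IsAlgebraic L x → x ∈ (algebraMap L Λ).range)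
    (Δ : Type) [Field Δ] [Algebra Λ Δ] [IsGalois Λ Δ]
    (iso : (D ⊗[L] Λ) ≃ₐ[Λ] Δ) :
    IsGalois L D :=
  descent_galois_of_tensor_galois_general
    (eq_bot_iff.2 fun x hx ↦ halg x (mem_separableClosure_iff.1 hx).isIntegral.isAlgebraic) iso
end

section
/- Let p be a prime and let k₁ ⊆ k₂ be an extension of fields of characteristic p such that the algebraic closure of k₁ in k₂ is a separable extension of k₁. Write F₁ = k₁((t)) ⊆ F₂ = k₂((t)). Let α ∈ k₂ be a nonzero element that does not lie in (the image of) k₁, and set E := F₂[Y]/(Y^p − Y − α·t^{−1}). Then E is a Galois field extension of F₂ of degree p, and E is not induced by any degree p Galois field extension of F₁: there is no field extension E₁ of F₁ with [E₁ : F₁] = p and E₁/F₁ Galois such that E₁ ⊗_{F₁} F₂ is isomorphic to E as an F₂-algebra. -/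
open Polynomial

open scoped TensorProduct

attribute [local instance] Algebra.TensorProduct.rightAlgebra

/-- The ring homomorphism `k₁((t)) →+* k₂((t))` applying a ring homomorphism
`f : k₁ →+* k₂` to each coefficient of a Laurent series. -/
noncomputable def lsMap {R S : Type*} [CommRing R] [CommRing S]
    (f : R →+* S) : LaurentSeries R →+* LaurentSeries S where
  toFun x := x.map f
  map_one' := by ext g; by_cases h : g = 0 <;> simp [h]
  map_mul' x y := HahnSeries.map_mul f.toNonUnitalRingHom
  map_zero' := by ext g; simp
  map_add' x y := HahnSeries.map_add f.toAddMonoidHom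

/-!
If `E₁ ⊗ F₂ ≅ E`, Artin–Schreier theory gives `y ∈ E₁` with `σ y = y - 1` and `y ^ p - y ∈ F₁`,
where `σ` generates `Gal(E₁/F₁)`. Over `F₂` both `y` and the root of `Y ^ p - Y - α / t` generate
`E`, so `α / t + f = w ^ p - w` for some `w ∈ F₂` and `f ∈ F₁`. Comparing the coefficients of
`t ^ (-p ^ j)` shows that the coefficient of `t⁻¹` in `w`, and hence `α`, becomes an element of `k₁`
after taking some `p ^ N`-th power. Thus `α` is purely inseparable over `k₁`, which separability
excludes outside `k₁`.
-/

section ArtinSchreier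

/-- The Artin–Schreier polynomial `Y ^ p - Y - a`, for `p` the characteristic. It is an
abbreviation so that it unifies with the explicit polynomial. -/
noncomputable abbrev artinSchreierPoly {R : Type*} [CommRing R] (p : ℕ) (a : R) : R[X] :=
  X ^ p - X - C a

theorem natDegree_artinSchreierPoly {R : Type*} [CommRing R] [Nontrivial R] {p : ℕ} (hp : 1 < p)
    (a : R) : (artinSchreierPoly p a).natDegree = p := by
  rw [artinSchreierPoly, sub_sub, natDegree_sub_eq_left_of_natDegree_lt] <;>
    simp only [natDegree_X_add_C, natDegree_X_pow, hp]

theorem monic_artinSchreierPoly {R : Type*} [CommRing R] [Nontrivial R] {p : ℕ} (hp : 1 < p)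
    (a : R) : (artinSchreierPoly p a).Monic := by
  rw [artinSchreierPoly, sub_sub]
  exact monic_X_pow_sub (by rw [degree_X_add_C]; exact_mod_cast hp)

theorem aeval_artinSchreierPoly_eq_zero_iff {R A : Type*} [CommRing R] [CommRing A] [Algebra R A]
    {p : ℕ} {a : R} {z : A} :
    aeval z (artinSchreierPoly p a) = 0 ↔ z ^ p - z = algebraMap R A a := by
  simp [artinSchreierPoly, sub_eq_zero]

theorem separable_artinSchreierPoly {R : Type*} [CommRing R] (p : ℕ) [CharP R p] (a : R) :
    (artinSchreierPoly p a).Separable := by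
  have hderiv : derivative (artinSchreierPoly p a) = -1 := by
    simp [artinSchreierPoly, derivative_X_pow]
  exact ⟨0, -1, by rw [hderiv]; ring⟩

theorem adjoinRoot_root_pow_sub_self {R : Type*} [CommRing R] (p : ℕ) (a : R) :
    AdjoinRoot.root (artinSchreierPoly p a) ^ p - AdjoinRoot.root (artinSchreierPoly p a) =
      algebraMap R (AdjoinRoot (artinSchreierPoly p a)) a := by
  rw [← aeval_artinSchreierPoly_eq_zero_iff, AdjoinRoot.aeval_eq, AdjoinRoot.mk_self]

theorem finrank_adjoinRoot_artinSchreierPoly {K : Type*} [Field K] {p : ℕ} (hp : 1 < p) (a : K) :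
    Module.finrank K (AdjoinRoot (artinSchreierPoly p a)) = p := by
  rw [(AdjoinRoot.powerBasis (monic_artinSchreierPoly hp a).ne_zero).finrank,
    AdjoinRoot.powerBasis_dim, natDegree_artinSchreierPoly hp]

variable {K L : Type*} [Field K] [Field L] [Algebra K L] {p : ℕ}

theorem le_natDegree_minpoly_of_apply_eq_add [CharP L p] {z c : L} (hz : IsIntegral K z)
    (σ : L →ₐ[K] L) (hc : c ≠ 0) (hσc : σ c = c) (hσz : σ z = z + c) :
    p ≤ (minpoly K z).natDegree := by
  classical
  have horbit (i : ℕ) : aeval (z + i * c) (minpoly K z) = 0 := by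
    induction i with
    | zero => simp
    | succ i ih =>
      have hstep : z + (i + 1 : ℕ) * c = σ (z + i * c) := by
        simp only [map_add, map_mul, map_natCast, hσz, hσc]
        push_cast
        ring
      rw [hstep, aeval_algHom_apply, ih, map_zero]
  have hinj : Set.InjOn (fun i : ℕ ↦ z + i * c) (Finset.range p) := fun i hi j hj hij ↦
    CharP.natCast_injOn_Iio L p (by simpa using hi) (by simpa using hj)
      (mul_right_cancel₀ hc (add_left_cancel hij))
  have hroots : ((Finset.range p).image fun i : ℕ ↦ z + i * c).val ⊆ (minpoly K z).aroots L := by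
    intro x hx
    rw [Finset.mem_val, Finset.mem_image] at hx
    obtain ⟨i, -, rfl⟩ := hx
    exact mem_aroots.2 ⟨minpoly.ne_zero hz, horbit i⟩
  calc p = ((Finset.range p).image fun i : ℕ ↦ z + i * c).card := by
        rw [Finset.card_image_of_injOn hinj, Finset.card_range]
    _ ≤ ((minpoly K z).map (algebraMap K L)).natDegree := card_le_degree_of_subset_roots hroots
    _ = (minpoly K z).natDegree := natDegree_map _

variable [Fact p.Prime]

theorem exists_eq_add_intCast_of_pow_sub_self_eq [CharP K p] {x y : K}
    (h : x ^ p - x = y ^ p - y) : ∃ n : ℤ, x = y + n := by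
  have hfix : (x - y) ^ p = x - y := by
    rw [sub_pow_char]
    linear_combination h
  obtain ⟨n, hn⟩ :=
    (mem_bot_iff_intCast p K).1 ((Subfield.mem_bot_iff_pow_eq_self K p).2 hfix)
  exact ⟨n, by rw [hn]; ring⟩

theorem splits_artinSchreierPoly [CharP K p] {a z : K} (hz : z ^ p - z = a) :
    (artinSchreierPoly p a).Splits := by
  have hshift : artinSchreierPoly p a = (X ^ p - X : K[X]).comp (X - C z) := by
    simp only [artinSchreierPoly, sub_comp, pow_comp, X_comp, sub_pow_char, ← hz, map_sub, map_pow]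
    ring
  have hsplits : (X ^ p - X : K[X]).Splits := by
    simpa using (Subfield.splits_bot K p).map (Subfield.subtype _)
  exact hshift ▸ hsplits.comp_X_sub_C z

theorem isGalois_adjoinRoot_artinSchreierPoly [CharP K p] (a : K)
    [Fact (Irreducible (artinSchreierPoly p a))] :
    IsGalois K (AdjoinRoot (artinSchreierPoly p a)) := by
  have : CharP (AdjoinRoot (artinSchreierPoly p a)) p :=
    charP_of_injective_algebraMap (algebraMap K _).injective p
  have hroot := adjoinRoot_root_pow_sub_self p a
  have : (artinSchreierPoly p a).IsSplittingField K (AdjoinRoot (artinSchreierPoly p a)) := by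
    constructor
    · simpa using splits_artinSchreierPoly hroot
    · rw [eq_top_iff, ← AdjoinRoot.adjoinRoot_eq_top]
      exact Algebra.adjoin_mono (Set.singleton_subset_iff.2 (mem_rootSet.2
        ⟨(Fact.out : Irreducible (artinSchreierPoly p a)).ne_zero,
          aeval_artinSchreierPoly_eq_zero_iff.2 hroot⟩))
  exact IsGalois.of_separable_splitting_field (separable_artinSchreierPoly p a)

theorem irreducible_artinSchreierPoly [CharP K p] {a : K} (h : ∀ w : K, w ^ p - w ≠ a) :
    Irreducible (artinSchreierPoly p a) := by
  have hp : 1 < p := (Fact.out : p.Prime).one_lt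
  have hmonic := monic_artinSchreierPoly hp a
  have hdegree := natDegree_artinSchreierPoly hp a
  let L := (artinSchreierPoly p a).SplittingField
  have : CharP L p := charP_of_injective_algebraMap (algebraMap K L).injective p
  have : IsGalois K L := IsGalois.of_separable_splitting_field (separable_artinSchreierPoly p a)
  obtain ⟨z, hz⟩ : ∃ z : L, aeval z (artinSchreierPoly p a) = 0 := by
    obtain ⟨z, hz⟩ := (SplittingField.splits (artinSchreierPoly p a)).exists_eval_eq_zero
      (by
        rw [degree_map, degree_eq_natDegree hmonic.ne_zero, hdegree]
        exact_mod_cast hp.ne_bot)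
    exact ⟨z, by rwa [eval_map_algebraMap] at hz⟩
  have hzint : IsIntegral K z := ⟨_, hmonic, hz⟩
  have hzpow : z ^ p - z = algebraMap K L a := aeval_artinSchreierPoly_eq_zero_iff.1 hz
  obtain ⟨σ, hσ⟩ : ∃ σ : Gal(L/K), σ z ≠ z := by
    by_contra! hfix
    obtain ⟨w, rfl⟩ := (IsGalois.mem_range_algebraMap_iff_fixed z).2 hfix
    exact h w ((algebraMap K L).injective (by simpa using hzpow))
  obtain ⟨n, hn⟩ : ∃ n : ℤ, σ z = z + n := exists_eq_add_intCast_of_pow_sub_self_eq (p := p) <| by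
    rw [← map_pow, ← map_sub, hzpow, AlgEquiv.commutes]
  have hle : p ≤ (minpoly K z).natDegree :=
    le_natDegree_minpoly_of_apply_eq_add hzint σ.toAlgHom (c := n)
      (fun hn0 ↦ hσ (by rw [hn, hn0, add_zero])) (map_intCast _ n) hn
  have hminpoly : minpoly K z = artinSchreierPoly p a :=
    eq_of_monic_of_associated (minpoly.monic hzint) hmonic
      (associated_of_dvd_of_natDegree_le (minpoly.dvd K z hz) hmonic.ne_zero (hdegree.le.trans hle))
  exact hminpoly ▸ minpoly.irreducible hzint

end ArtinSchreier

section CyclicGalois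

variable {K L : Type*} [Field K] [Field L] [Algebra K L] [IsGalois K L] {σ : Gal(L/K)}

theorem mem_range_algebraMap_of_generator_apply_eq (hσ : ∀ τ, τ ∈ Subgroup.zpowers σ) {x : L}
    (hx : σ x = x) : x ∈ Set.range (algebraMap K L) := by
  have hstab : Subgroup.zpowers σ ≤ MulAction.stabilizer Gal(L/K) x :=
    Subgroup.zpowers_le.2 hx
  exact (InfiniteGalois.mem_range_algebraMap_iff_fixed x).2 fun τ ↦ hstab (hσ τ)

theorem algebraMap_trace_eq_sum_pow_generator [FiniteDimensional K L]
    (hσ : ∀ τ, τ ∈ Subgroup.zpowers σ) (x : L) :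
    algebraMap K L (Algebra.trace K L x) = ∑ i ∈ Finset.range (orderOf σ), (σ ^ i) x := by
  classical
  rw [trace_eq_sum_automorphisms, ← IsCyclic.image_range_orderOf hσ,
    Finset.sum_image (by simpa using pow_injOn_Iio_orderOf)]

/-- With `θ` of trace `1` and `S i = ∑_{j < i} σ ^ j x`, the witness is `∑_i (S i) (σ ^ i θ)`:
as `σ (S i) = S (i + 1) - x`, applying `σ` shifts the sum and subtracts `x`. -/
theorem exists_sub_apply_eq_of_trace_eq_zero [FiniteDimensional K L]
    (hσ : ∀ τ, τ ∈ Subgroup.zpowers σ) {x : L} (hx : Algebra.trace K L x = 0) :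
    ∃ y, y - σ y = x := by
  obtain ⟨θ, hθ⟩ := Algebra.trace_surjective K L 1
  have hσ_succ (i : ℕ) (u : L) : σ ((σ ^ i) u) = (σ ^ (i + 1)) u := by
    rw [pow_succ', AlgEquiv.mul_apply]
  have htrace (u : L) := algebraMap_trace_eq_sum_pow_generator hσ u
  let S (i : ℕ) : L := ∑ j ∈ Finset.range i, (σ ^ j) x
  let T (i : ℕ) : L := S i * (σ ^ i) θ
  have hσS (i : ℕ) : σ (S i) = S (i + 1) - x := by
    simp only [S, map_sum, hσ_succ, Finset.sum_range_succ', pow_zero, AlgEquiv.one_apply,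
      add_sub_cancel_right]
  have hTzero : T 0 = 0 := by simp only [T, S, Finset.range_zero, Finset.sum_empty, zero_mul]
  have hTorder : T (orderOf σ) = 0 := by
    simp only [T, S, ← htrace, hx, map_zero, zero_mul]
  have hσT (i : ℕ) : σ (T i) = T (i + 1) - x * σ ((σ ^ i) θ) := by
    simp only [T, map_mul, hσS, hσ_succ]
    ring
  refine ⟨∑ i ∈ Finset.range (orderOf σ), T i, ?_⟩
  have hshift :
      ∑ i ∈ Finset.range (orderOf σ), T (i + 1) = ∑ i ∈ Finset.range (orderOf σ), T i := by
    rw [← add_zero (∑ i ∈ _, T (i + 1)), ← hTzero, ← Finset.sum_range_succ', Finset.sum_range_succ,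
      hTorder, add_zero]
  rw [map_sum, Finset.sum_congr rfl fun i _ ↦ hσT i, Finset.sum_sub_distrib, hshift,
    ← Finset.mul_sum, ← map_sum, ← htrace, hθ, map_one, map_one]
  ring

variable {p : ℕ} [Fact p.Prime] [CharP K p]

theorem exists_apply_eq_sub_one_and_pow_sub_self_eq [FiniteDimensional K L]
    (hσ : ∀ τ, τ ∈ Subgroup.zpowers σ) (hrank : p ∣ Module.finrank K L) :
    ∃ (y : L) (f : K), σ y = y - 1 ∧ y ^ p - y = algebraMap K L f := by
  have : CharP L p := charP_of_injective_algebraMap (algebraMap K L).injective p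
  have htrace : Algebra.trace K L 1 = 0 := by
    rw [← map_one (algebraMap K L), Algebra.trace_algebraMap, nsmul_one,
      CharP.cast_eq_zero_iff K p]
    exact hrank
  obtain ⟨y, hy⟩ := exists_sub_apply_eq_of_trace_eq_zero hσ htrace
  have hσy : σ y = y - 1 := by linear_combination -hy
  obtain ⟨f, hf⟩ := mem_range_algebraMap_of_generator_apply_eq hσ (x := y ^ p - y) <| by
    rw [map_sub, map_pow, hσy, sub_pow_char, one_pow, sub_sub_sub_cancel_right]
  exact ⟨y, f, hσy, hf.symm⟩

/-- Since `σ z = z + n` for some integer `n`, the element `w = z + n y` is fixed by `σ`. -/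
theorem exists_pow_sub_self_eq_add_intCast_mul (hσ : ∀ τ, τ ∈ Subgroup.zpowers σ) {y z : L}
    {f a : K} (hσy : σ y = y - 1) (hy : y ^ p - y = algebraMap K L f)
    (hz : z ^ p - z = algebraMap K L a) : ∃ (w : K) (n : ℤ), w ^ p - w = a + n * f := by
  have : CharP L p := charP_of_injective_algebraMap (algebraMap K L).injective p
  obtain ⟨n, hn⟩ : ∃ n : ℤ, σ z = z + n := exists_eq_add_intCast_of_pow_sub_self_eq (p := p) <| by
    rw [← map_pow, ← map_sub, hz, AlgEquiv.commutes]
  obtain ⟨w, hw⟩ := mem_range_algebraMap_of_generator_apply_eq hσ (x := z + n * y) <| by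
    rw [map_add, map_mul, map_intCast, hn, hσy]
    ring
  have hnpow : (n : L) ^ p = n := map_intCast (frobenius L p) n
  refine ⟨w, n, (algebraMap K L).injective ?_⟩
  simp only [map_sub, map_pow, hw, add_pow_char, mul_pow, hnpow, map_add, map_mul, map_intCast]
  linear_combination hz + n * hy

end CyclicGalois

section BaseChange

variable {K K' : Type*} [Field K] [Field K'] [Algebra K K'] {p : ℕ} [Fact p.Prime] [CharP K p]

theorem exists_pow_sub_self_eq_add_algebraMap_of_baseChange {E₁ E : Type*} [Field E₁]
    [Algebra K E₁] [IsGalois K E₁] [Field E] [Algebra K' E] [IsGalois K' E]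
    (hrank : Module.finrank K E₁ = p) (e : K' ⊗[K] E₁ ≃ₐ[K'] E) {a : K'} {z : E}
    (hz : z ^ p - z = algebraMap K' E a) :
    ∃ (w : K') (f : K), w ^ p - w = a + algebraMap K K' f := by
  have hp : p.Prime := Fact.out
  have : FiniteDimensional K E₁ := Module.finite_of_finrank_pos (hrank ▸ hp.pos)
  have : FiniteDimensional K' E := Module.Finite.equiv e.toLinearEquiv
  have : CharP K' p := charP_of_injective_algebraMap (algebraMap K K').injective p
  have hcard : Nat.card Gal(E₁/K) = p := by rw [IsGalois.card_aut_eq_finrank, hrank]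
  have hcard' : Nat.card Gal(E/K') = p := by
    rw [IsGalois.card_aut_eq_finrank, ← e.toLinearEquiv.finrank_eq, Module.finrank_baseChange,
      hrank]
  have : Nontrivial Gal(E₁/K) := Finite.one_lt_card_iff_nontrivial.1 (hcard ▸ hp.one_lt)
  obtain ⟨σ, hσ⟩ := exists_ne (1 : Gal(E₁/K))
  obtain ⟨y, f, hσy, hy⟩ := exists_apply_eq_sub_one_and_pow_sub_self_eq (p := p)
    (fun τ ↦ mem_zpowers_of_prime_card hcard hσ) hrank.symm.dvd
  let τ : Gal(E/K') := (e.symm.trans (Algebra.TensorProduct.congr AlgEquiv.refl σ)).trans e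
  have hτ : τ (e (1 ⊗ₜ y)) = e (1 ⊗ₜ y) - 1 := by
    simp [τ, hσy, TensorProduct.tmul_sub, ← Algebra.TensorProduct.one_def]
  have hτ_ne : τ ≠ 1 := by
    intro hτ_one
    rw [hτ_one, AlgEquiv.one_apply, eq_comm, sub_eq_self] at hτ
    exact one_ne_zero hτ
  have hy' : e (1 ⊗ₜ y) ^ p - e (1 ⊗ₜ y) = algebraMap K' E (algebraMap K K' f) := by
    rw [← map_pow, ← map_sub, Algebra.TensorProduct.tmul_pow, one_pow, ← TensorProduct.tmul_sub, hy,
      ← Algebra.TensorProduct.tmul_one_eq_one_tmul]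
    exact e.commutes _
  obtain ⟨w, n, hw⟩ := exists_pow_sub_self_eq_add_intCast_mul
    (fun τ' ↦ mem_zpowers_of_prime_card hcard' hτ_ne) hτ hy' hz
  exact ⟨w, n * f, by rw [hw, map_mul, map_intCast]⟩

end BaseChange

section LaurentSeries

theorem lsMap_coeff {R S : Type*} [CommRing R] [CommRing S] (f : R →+* S) (x : LaurentSeries R)
    (n : ℤ) : (lsMap f x).coeff n = f (x.coeff n) :=
  rfl

theorem charP_laurentSeries (k : Type*) [CommRing k] (p : ℕ) [CharP k p] :
    CharP (LaurentSeries k) p :=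
  charP_of_injective_ringHom (f := (HahnSeries.C : k →+* LaurentSeries k)) HahnSeries.C_injective p

variable {k : Type*} [CommRing k] {p : ℕ} [Fact p.Prime] [CharP k p]

theorem coeff_powerSeries_pow_char (f : PowerSeries k) (m : ℕ) :
    PowerSeries.coeff m (f ^ p) = if p ∣ m then PowerSeries.coeff (m / p) f ^ p else 0 := by
  have hp : p ≠ 0 := (Fact.out : p.Prime).ne_zero
  have hfrob : PowerSeries.map (frobenius k p) (PowerSeries.expand p hp f) = f ^ p :=
    MvPowerSeries.map_frobenius_expand p hp
  rw [← hfrob, PowerSeries.coeff_map, PowerSeries.coeff_expand, apply_ite (frobenius k p), map_zero,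
    frobenius_def]

theorem coeff_coe_powerSeries_pow_char (f : PowerSeries k) (n : ℤ) :
    ((f : LaurentSeries k) ^ p).coeff n =
      if (p : ℤ) ∣ n then (f : LaurentSeries k).coeff (n / p) ^ p else 0 := by
  have hp : p ≠ 0 := (Fact.out : p.Prime).ne_zero
  rw [← PowerSeries.coe_pow]
  cases n with
  | ofNat m =>
    rw [Int.ofNat_eq_natCast, LaurentSeries.coeff_coe_powerSeries, coeff_powerSeries_pow_char,
      ← Int.natCast_div, LaurentSeries.coeff_coe_powerSeries]
    simp only [Int.natCast_dvd_natCast]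
  | negSucc m =>
    have hneg : Int.negSucc m / p < 0 :=
      Int.ediv_neg_of_neg_of_pos (Int.negSucc_lt_zero m) (by positivity)
    simp only [PowerSeries.coeff_coe, Int.negSucc_lt_zero, hneg, if_true, zero_pow hp, ite_self]

theorem coeff_laurentSeries_pow_char (w : LaurentSeries k) (n : ℤ) :
    (w ^ p).coeff n = if (p : ℤ) ∣ n then w.coeff (n / p) ^ p else 0 := by
  have hp : (p : ℤ) ≠ 0 := mod_cast (Fact.out : p.Prime).ne_zero
  conv_lhs => rw [← w.single_order_mul_powerSeriesPart]
  conv_rhs => rw [← w.single_order_mul_powerSeriesPart]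
  have hdvd : (p : ℤ) ∣ n - p * w.order ↔ (p : ℤ) ∣ n := dvd_sub_left (dvd_mul_right _ _)
  rw [mul_pow, HahnSeries.single_pow, nsmul_eq_mul, one_pow, HahnSeries.coeff_single_mul,
    HahnSeries.coeff_single_mul, one_mul, one_mul, coeff_coe_powerSeries_pow_char,
    Int.sub_mul_ediv_left _ _ hp]
  simp only [hdvd]

/-- Comparing coefficients at `-p ^ (j + 1)` gives
`w.coeff (-p ^ j) ^ p - w.coeff (-p ^ (j + 1)) ∈ S`, and `w.coeff (-p ^ j)` vanishes for large `j`.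
Hence `w.coeff (-1) ∈ S` by descent, and the coefficient at `-1` of `w ^ p` is zero. -/
theorem mem_of_pow_sub_self_eq_single_add {σ : Type*} [SetLike σ k] [AddSubgroupClass σ k] {S : σ}
    (hS : ∀ x : k, x ^ p ∈ S → x ∈ S) {α : k} {w g : LaurentSeries k} (hg : ∀ n, g.coeff n ∈ S)
    (hw : w ^ p - w = HahnSeries.single (-1 : ℤ) α + g) : α ∈ S := by
  have hp : 1 < p := (Fact.out : p.Prime).one_lt
  have hp_pow (j : ℕ) : j < (p : ℤ) ^ j := mod_cast Nat.lt_pow_self hp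
  have hcoeff (n : ℤ) : (w ^ p).coeff n - w.coeff n =
      (HahnSeries.single (-1 : ℤ) α).coeff n + g.coeff n := by
    rw [← HahnSeries.coeff_sub, hw, HahnSeries.coeff_add]
  have hdescend (j : ℕ) (hj : w.coeff (-p ^ (j + 1)) ∈ S) : w.coeff (-p ^ j) ∈ S := by
    have hne : -(p : ℤ) ^ (j + 1) ≠ -1 := by
      have := hp_pow (j + 1)
      omega
    have hdiv : -(p : ℤ) ^ (j + 1) = p * -p ^ j := by ring
    have hpow : (w ^ p).coeff (-p ^ (j + 1)) = w.coeff (-p ^ j) ^ p := by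
      rw [coeff_laurentSeries_pow_char, hdiv, if_pos (dvd_mul_right _ _),
        Int.mul_ediv_cancel_left _ (by positivity)]
    have hstep := hcoeff (-p ^ (j + 1))
    rw [hpow, HahnSeries.coeff_single_of_ne hne, zero_add, sub_eq_iff_eq_add] at hstep
    exact hS _ (hstep ▸ add_mem (hg _) hj)
  have hlarge : w.coeff (-p ^ (-w.order).toNat) ∈ S := by
    rw [HahnSeries.coeff_eq_zero_of_lt_order]
    · exact zero_mem S
    · have := hp_pow (-w.order).toNat
      omega
  have hone : w.coeff (-1) ∈ S := by
    simpa only [pow_zero] using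
      Nat.decreasingInduction (motive := fun j _ ↦ w.coeff (-p ^ j) ∈ S)
        (fun j _ ↦ hdescend j) hlarge (Nat.zero_le _)
  have hp_not_dvd : ¬ (p : ℤ) ∣ -1 := by
    rw [Int.dvd_neg]
    exact_mod_cast Nat.dvd_one.not.2 hp.ne'
  have hα := hcoeff (-1)
  rw [coeff_laurentSeries_pow_char, if_neg hp_not_dvd, HahnSeries.coeff_single_same, zero_sub,
    ← sub_eq_iff_eq_add] at hα
  exact hα ▸ sub_mem (neg_mem hone) (hg _)

theorem pow_sub_self_ne_single_neg_one [IsReduced k] {α : k} (hα : α ≠ 0) (w : LaurentSeries k) :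
    w ^ p - w ≠ HahnSeries.single (-1 : ℤ) α := by
  intro hw
  have hroot (x : k) (hx : x ^ p ∈ (⊥ : AddSubgroup k)) : x ∈ (⊥ : AddSubgroup k) :=
    eq_zero_of_pow_eq_zero hx
  exact hα (mem_of_pow_sub_self_eq_single_add hroot (g := 0) (fun _ ↦ zero_mem _)
    (hw.trans (add_zero _).symm))

end LaurentSeries

section PerfectClosure

variable {k₁ k₂ : Type*} [Field k₁] [Field k₂] [Algebra k₁ k₂]

theorem perfectClosure_eq_bot_of_isSeparable_algebraicClosure
    [Algebra.IsSeparable k₁ (algebraicClosure k₁ k₂)] : perfectClosure k₁ k₂ = ⊥ := by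
  have hle : perfectClosure k₁ k₂ ≤ algebraicClosure k₁ k₂ := le_algebraicClosure _ _ _
  have : Algebra.IsSeparable k₁ (perfectClosure k₁ k₂) :=
    Algebra.IsSeparable.of_algHom k₁ _ (IntermediateField.inclusion hle)
  exact IntermediateField.eq_bot_of_isPurelyInseparable_of_isSeparable _

theorem mem_perfectClosure_of_pow_mem {p : ℕ} [ExpChar k₁ p] {x : k₂}
    (hx : x ^ p ∈ perfectClosure k₁ k₂) : x ∈ perfectClosure k₁ k₂ := by
  obtain ⟨n, hn⟩ := (mem_perfectClosure_iff_pow_mem p).1 hx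
  exact (mem_perfectClosure_iff_pow_mem p).2 ⟨n + 1, by rwa [pow_succ', pow_mul]⟩

theorem mem_perfectClosure_of_pow_sub_self_eq {p : ℕ} [Fact p.Prime] [CharP k₁ p] {α : k₂}
    {w : LaurentSeries k₂} {f : LaurentSeries k₁}
    (hw : w ^ p - w = HahnSeries.single (-1 : ℤ) α + lsMap (algebraMap k₁ k₂) f) :
    α ∈ perfectClosure k₁ k₂ := by
  have : CharP k₂ p := charP_of_injective_algebraMap (algebraMap k₁ k₂).injective p
  refine mem_of_pow_sub_self_eq_single_add (fun _ ↦ mem_perfectClosure_of_pow_mem) (fun n ↦ ?_) hw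
  exact lsMap_coeff (algebraMap k₁ k₂) f n ▸ algebraMap_mem _ _

end PerfectClosure

theorem artinSchreier_not_induced_by_galois_general {p : ℕ} [Fact p.Prime] {k₁ k₂ : Type*}
    [Field k₁] [Field k₂] [CharP k₁ p] [Algebra k₁ k₂] {α : k₂} (hα : α ∉ perfectClosure k₁ k₂) :
    letI : Algebra (LaurentSeries k₁) (LaurentSeries k₂) :=
      (lsMap (algebraMap k₁ k₂)).toAlgebra
    letI f : (LaurentSeries k₂)[X] := artinSchreierPoly p (HahnSeries.single (-1 : ℤ) α)
    Irreducible f ∧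
    (∀ [Fact (Irreducible f)], IsGalois (LaurentSeries k₂) (AdjoinRoot f) ∧
      Module.finrank (LaurentSeries k₂) (AdjoinRoot f) = p) ∧
    ¬ ∃ (E₁ : Type*) (_ : Field E₁) (_ : Algebra (LaurentSeries k₁) E₁),
        Module.finrank (LaurentSeries k₁) E₁ = p ∧ IsGalois (LaurentSeries k₁) E₁ ∧
        Nonempty ((E₁ ⊗[LaurentSeries k₁] LaurentSeries k₂) ≃ₐ[LaurentSeries k₂]
          AdjoinRoot f) := by
  let _ : Algebra (LaurentSeries k₁) (LaurentSeries k₂) := (lsMap (algebraMap k₁ k₂)).toAlgebra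
  have : CharP k₂ p := charP_of_injective_algebraMap (algebraMap k₁ k₂).injective p
  have := charP_laurentSeries k₁ p
  have := charP_laurentSeries k₂ p
  have hα₀ : α ≠ 0 := fun h ↦ hα (h ▸ zero_mem _)
  have hirr := irreducible_artinSchreierPoly (pow_sub_self_ne_single_neg_one (p := p) hα₀)
  refine ⟨hirr, fun {_} ↦ ⟨isGalois_adjoinRoot_artinSchreierPoly _,
    finrank_adjoinRoot_artinSchreierPoly (Fact.out : p.Prime).one_lt _⟩, ?_⟩
  rintro ⟨E₁, _, _, hrank, _, ⟨e⟩⟩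
  have := Fact.mk hirr
  have := isGalois_adjoinRoot_artinSchreierPoly
    (p := p) (HahnSeries.single (-1 : ℤ) α : LaurentSeries k₂)
  obtain ⟨w, f, hw⟩ := exists_pow_sub_self_eq_add_algebraMap_of_baseChange hrank
    ((Algebra.TensorProduct.commRight _ _ E₁).trans e)
    (adjoinRoot_root_pow_sub_self p _)
  exact hα (mem_perfectClosure_of_pow_sub_self_eq hw)

/-- Artin–Schreier extensions of `k₂((t))` given by `Y^p - Y - α/t` with
`α ∈ k₂ \ k₁` do not descend to degree `p` Galois extensions of `k₁((t))`. -/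
theorem artinSchreier_not_induced_by_galois
    (p : ℕ) (hp : p.Prime) (k₁ k₂ : Type) [Field k₁] [Field k₂] [CharP k₁ p] [CharP k₂ p]
    [Algebra k₁ k₂] [Algebra.IsSeparable k₁ (algebraicClosure k₁ k₂)]
    (α : k₂) (hα : α ≠ 0) (hα' : α ∉ (algebraMap k₁ k₂).range) :
    letI : Algebra (LaurentSeries k₁) (LaurentSeries k₂) :=
      (lsMap (algebraMap k₁ k₂)).toAlgebra
    Irreducible (X ^ p - X - C (HahnSeries.single (-1 : ℤ) α) :
        Polynomial (LaurentSeries k₂)) ∧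
    (∀ [Fact (Irreducible (X ^ p - X - C (HahnSeries.single (-1 : ℤ) α) :
        Polynomial (LaurentSeries k₂)))],
      IsGalois (LaurentSeries k₂)
        (AdjoinRoot (X ^ p - X - C (HahnSeries.single (-1 : ℤ) α) :
          Polynomial (LaurentSeries k₂))) ∧
      Module.finrank (LaurentSeries k₂)
        (AdjoinRoot (X ^ p - X - C (HahnSeries.single (-1 : ℤ) α) :
          Polynomial (LaurentSeries k₂))) = p) ∧
    ¬ ∃ (E₁ : Type) (_ : Field E₁) (_ : Algebra (LaurentSeries k₁) E₁),
        Module.finrank (LaurentSeries k₁) E₁ = p ∧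
        IsGalois (LaurentSeries k₁) E₁ ∧
        Nonempty ((E₁ ⊗[LaurentSeries k₁] LaurentSeries k₂) ≃ₐ[LaurentSeries k₂]
          AdjoinRoot (X ^ p - X - C (HahnSeries.single (-1 : ℤ) α) :
            Polynomial (LaurentSeries k₂))) := by
  have : Fact p.Prime := ⟨hp⟩
  exact artinSchreier_not_induced_by_galois_general <| by
    rwa [perfectClosure_eq_bot_of_isSeparable_algebraicClosure, IntermediateField.mem_bot]
end

section
/- Let p be a prime, let k₁ ⊆ k₂ be an extension of fields of characteristic p, and let α ∈ k₂. If there exist β ∈ k₁((t)) and γ ∈ k₂((t)) such that α·t^{−1} − β = γ^p − γ holds in k₂((t)), then α is purely inseparable over k₁; that is, there exists n ≥ 0 such that α^{p^n} lies in (the image of) k₁. -/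
/-!
The elements of `k₂` that are purely inseparable over `k₁` form a subring `P` closed under `p`-th
roots and containing every coefficient of `β`. In characteristic `p` the `p`-th power of
`∑ γₙ tⁿ` is `∑ γₙ ^ p t ^ (p * n)`, so comparing coefficients at `p * n ≠ -1` for `n < 0` puts
`γₙ ^ p - γₚₙ` in `P`. Since `γ` has finitely many terms of negative degree, descending along
`n ↦ p * n` shows that all of them have coefficients in `P`. As `γ ^ p` has no term of degree `-1`,
the coefficient at `-1` gives `α = β₋₁ - γ₋₁ ∈ P`.
-/

open scoped LaurentSeries PowerSeries

theorem laurentSeries_pow_eq_single_mul_powerSeriesPart_pow {R : Type*} [CommSemiring R]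
    (f : R⸨X⸩) (n : ℕ) :
    f ^ n = HahnSeries.single (n * f.order) 1 *
      HahnSeries.ofPowerSeries ℤ R (f.powerSeriesPart ^ n) := by
  conv_lhs => rw [← f.single_order_mul_powerSeriesPart]
  rw [mul_pow, HahnSeries.single_pow, one_pow, nsmul_eq_mul, map_pow]

section CoeffPow

variable {R : Type*} [CommRing R] {p : ℕ} [ExpChar R p]

theorem powerSeries_coeff_pow_expChar (f : R⟦X⟧) (n : ℕ) :
    PowerSeries.coeff n (f ^ p) =
      if p ∣ n then PowerSeries.coeff (n / p) f ^ p else 0 := by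
  have hp : p ≠ 0 := expChar_ne_zero R p
  have h : (f.expand p hp).map (frobenius R p) = f ^ p := MvPowerSeries.map_frobenius_expand p hp
  rw [← h, PowerSeries.coeff_map, PowerSeries.coeff_expand, apply_ite (frobenius R p),
    frobenius_def, map_zero]

theorem laurentSeries_coeff_pow_expChar_mul (f : R⸨X⸩) (n : ℤ) :
    (f ^ p).coeff (p * n) = f.coeff n ^ p := by
  have hp : 0 < p := expChar_pos R p
  rw [laurentSeries_pow_eq_single_mul_powerSeriesPart_pow, HahnSeries.coeff_single_mul, one_mul,
    ← mul_sub]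
  rcases lt_or_ge n f.order with hn | hn
  · rw [PowerSeries.coeff_coe, if_pos (mul_neg_of_pos_of_neg (mod_cast hp) (sub_neg.mpr hn)),
      HahnSeries.coeff_eq_zero_of_lt_order hn, zero_pow hp.ne']
  · obtain ⟨d, rfl⟩ := Int.le.dest hn
    rw [add_sub_cancel_left, ← Nat.cast_mul, LaurentSeries.coeff_coe_powerSeries,
      powerSeries_coeff_pow_expChar, if_pos (dvd_mul_right p d), Nat.mul_div_cancel_left d hp,
      LaurentSeries.powerSeriesPart_coeff]

theorem laurentSeries_coeff_pow_expChar_of_not_dvd (f : R⸨X⸩) {m : ℤ} (hm : ¬ (p : ℤ) ∣ m) :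
    (f ^ p).coeff m = 0 := by
  rw [laurentSeries_pow_eq_single_mul_powerSeriesPart_pow, HahnSeries.coeff_single_mul, one_mul,
    PowerSeries.coeff_coe]
  split_ifs
  · rfl
  · have h : ¬ p ∣ (m - p * f.order).natAbs := by
      rwa [← Int.natCast_dvd, dvd_sub_left (dvd_mul_right _ _)]
    rw [powerSeries_coeff_pow_expChar, if_neg h]

end CoeffPow

theorem mem_perfectClosure_of_pow_mem_s4 {R A : Type*} [CommSemiring R] [CommSemiring A] [Algebra R A]
    {p : ℕ} [ExpChar A p] {x : A} (hx : x ^ p ∈ Subalgebra.perfectClosure R A p) :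
    x ∈ Subalgebra.perfectClosure R A p := by
  obtain ⟨n, hn⟩ := hx
  exact ⟨n + 1, by rwa [pow_succ', pow_mul]⟩

theorem coeff_mem_of_coeff_pow_sub_self_mem {R : Type*} [CommRing R] {p : ℕ} [ExpChar R p]
    (hp : 1 < p) (P : AddSubgroup R) (hP : ∀ x, x ^ p ∈ P → x ∈ P) (γ : R⸨X⸩)
    (hγ : ∀ n < 0, (γ ^ p - γ).coeff (p * n) ∈ P) {n : ℤ} (hn : n < 0) : γ.coeff n ∈ P := by
  by_contra hmem
  let s : Set ℤ := {m | m < 0 ∧ γ.coeff m ∉ P}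
  have hs : s ⊆ γ.support := fun m hm h => hm.2 (h ▸ zero_mem P)
  have hwf : s.IsWF := γ.isWF_support.mono hs
  have hne : s.Nonempty := ⟨n, hn, hmem⟩
  obtain ⟨hm, hm_mem⟩ := hwf.min_mem hne
  set m := hwf.min hne
  have hlt : p * m < m := mul_lt_of_one_lt_left hm (mod_cast hp)
  have hpm : γ.coeff (p * m) ∈ P := by
    by_contra h
    exact hwf.not_lt_min hne ⟨hlt.trans hm, h⟩ hlt
  refine hm_mem (hP _ ?_)
  rw [← laurentSeries_coeff_pow_expChar_mul]
  simpa using add_mem (hγ m hm) hpm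

theorem purelyInseparable_of_artinSchreier_eq_general
    {R S : Type*} [CommRing R] [CommRing S] [Algebra R S] {p : ℕ} (hp : p.Prime) [CharP S p]
    (α : S) (β : R⸨X⸩) (γ : S⸨X⸩)
    (h : HahnSeries.single (-1 : ℤ) α - lsMap (algebraMap R S) β = γ ^ p - γ) :
    ∃ n : ℕ, α ^ p ^ n ∈ (algebraMap R S).range := by
  have : ExpChar S p := .prime hp
  let P := Subalgebra.perfectClosure R S p
  have hβ (n : ℤ) : (lsMap (algebraMap R S) β).coeff n ∈ P := P.algebraMap_mem (β.coeff n)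
  have not_dvd : ¬ (p : ℤ) ∣ -1 := by
    rw [dvd_neg]
    exact_mod_cast hp.not_dvd_one
  have hγ : γ.coeff (-1) ∈ P := by
    refine coeff_mem_of_coeff_pow_sub_self_mem hp.one_lt P.toSubring.toAddSubgroup
      (fun _ => mem_perfectClosure_of_pow_mem_s4) γ (fun n _ => ?_) neg_one_lt_zero
    have hne : (p : ℤ) * n ≠ -1 := fun h => not_dvd (h ▸ dvd_mul_right _ _)
    rw [← h, HahnSeries.coeff_sub, HahnSeries.coeff_single_of_ne hne, zero_sub]
    exact neg_mem (hβ _)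
  have hα : α = (lsMap (algebraMap R S) β).coeff (-1) - γ.coeff (-1) := by
    have h_coeff := congr_arg (HahnSeries.coeff · (-1)) h
    simp only [HahnSeries.coeff_sub, HahnSeries.coeff_single_same,
      laurentSeries_coeff_pow_expChar_of_not_dvd γ not_dvd] at h_coeff
    linear_combination h_coeff
  exact hα ▸ sub_mem (hβ _) hγ

/-- If `α·t⁻¹ - β = γ^p - γ` in `k₂((t))` with `β ∈ k₁((t))` and `γ ∈ k₂((t))`, then
`α` is purely inseparable over `k₁`. -/
theorem purelyInseparable_of_artinSchreier_eq
    (p : ℕ) (hp : p.Prime) (k₁ k₂ : Type) [Field k₁] [Field k₂] [CharP k₁ p] [CharP k₂ p]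
    [Algebra k₁ k₂] (α : k₂) (β : LaurentSeries k₁) (γ : LaurentSeries k₂)
    (h : HahnSeries.single (-1 : ℤ) α - lsMap (algebraMap k₁ k₂) β = γ ^ p - γ) :
    ∃ n : ℕ, α ^ p ^ n ∈ (algebraMap k₁ k₂).range :=
  purelyInseparable_of_artinSchreier_eq_general hp α β γ h
end

section
/- Let k₁ ⊆ k₂ be an extension of fields such that k₁ is algebraically closed in k₂. Then k₁((t)) is algebraically closed in k₂((t)): every element of k₂((t)) that is algebraic over k₁((t)) lies in the image of k₁((t)). -/
/-! Divide an algebraic relation for `z ∈ S⟦X⟧` over `R⟦X⟧` by the largest possible power of `X`: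
reducing what remains modulo `X` shows that the constant term of `z` is algebraic over `R`, hence
lies in `R`. Since `(z - z(0)) / X` is again algebraic over `R⟦X⟧`, the same argument reaches every
coefficient. Multiplying a Laurent series by a power of `X` reduces it to this case. -/

open scoped LaurentSeries PowerSeries nonZeroDivisors
open Polynomial (C aeval)

section Algebraic

variable {A B : Type*} [CommRing A]

theorem isAlgebraic_of_algebraMap_mul_add [Ring B] [Algebra A B] {a : A} (ha : a ∈ A⁰)
    (b : A) {x : B} (hx : IsAlgebraic A (algebraMap A B a * x + algebraMap A B b)) :
    IsAlgebraic A x := by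
  obtain ⟨P, hP, hPx⟩ := hx
  refine ⟨(P.taylor b).comp (C a * Polynomial.X), ?_, ?_⟩
  · rwa [Ne, Polynomial.comp_C_mul_X_eq_zero_iff ha, Polynomial.taylor_eq_zero]
  · simpa [Polynomial.taylor_apply, Polynomial.aeval_comp] using hPx

theorem isAlgebraic_of_isLocalization [CommRing B] [Algebra A B] (M : Submonoid A)
    (L : Type*) [CommRing L] [Algebra A L] [IsLocalization M L] [Algebra L B]
    [IsScalarTower A L B] {x : B} (hx : IsAlgebraic L x) :
    IsAlgebraic A x := by
  obtain ⟨P, hP, hPx⟩ := hx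
  refine ⟨IsLocalization.integerNormalization M P, fun hzero ↦ hP ?_,
    IsLocalization.integerNormalization_aeval_eq_zero M P hPx⟩
  obtain ⟨b, hb, hbP⟩ := IsLocalization.integerNormalization_spec M P
  rw [hzero, Polynomial.map_zero, ← algebraMap_smul L b P] at hbP
  exact (IsLocalization.map_units L (⟨b, hb⟩ : M)).smul_eq_zero.mp hbP.symm

end Algebraic

section PowerSeries

theorem finiteMultiplicity_C_X {A : Type*} [CommSemiring A] {P : Polynomial A⟦X⟧} (hP : P ≠ 0) :
    FiniteMultiplicity (C PowerSeries.X) P := by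
  obtain ⟨i, hi⟩ : ∃ i, P.coeff i ≠ 0 := by
    simpa [Polynomial.ext_iff] using hP
  obtain ⟨n, hn⟩ := PowerSeries.exists_coeff_ne_zero_iff_ne_zero.mpr hi
  refine ⟨n, fun hdvd ↦ hn ?_⟩
  rw [← Polynomial.C_pow, Polynomial.C_dvd_iff_dvd_coeff] at hdvd
  exact PowerSeries.X_pow_dvd_iff.mp (hdvd i) n n.lt_succ_self

theorem C_X_dvd_iff_map_constantCoeff_eq_zero {A : Type*} [CommSemiring A] {P : Polynomial A⟦X⟧} :
    C PowerSeries.X ∣ P ↔ P.map PowerSeries.constantCoeff = 0 := by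
  simp only [Polynomial.C_dvd_iff_dvd_coeff, PowerSeries.X_dvd_iff, Polynomial.ext_iff,
    Polynomial.coeff_map, Polynomial.coeff_zero]

variable {R S : Type*} [CommRing R] [CommRing S] [Algebra R S]

theorem isAlgebraic_constantCoeff {z : S⟦X⟧} (hz : IsAlgebraic R⟦X⟧ z) :
    IsAlgebraic R (PowerSeries.constantCoeff z) := by
  obtain ⟨P, hP, hPz⟩ := hz
  obtain ⟨Q, hPQ, hQ⟩ := (finiteMultiplicity_C_X hP).exists_eq_pow_mul_and_not_dvd
  rw [C_X_dvd_iff_map_constantCoeff_eq_zero] at hQ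
  have hQz : aeval z Q = 0 := by
    rw [hPQ, map_mul, map_pow, Polynomial.aeval_C, PowerSeries.algebraMap_apply'',
      PowerSeries.map_X] at hPz
    exact PowerSeries.X_pow_mul_cancel (hPz.trans (mul_zero _).symm)
  refine ⟨_, hQ, ?_⟩
  have hcomp : (algebraMap R S).comp PowerSeries.constantCoeff =
      PowerSeries.constantCoeff.comp (algebraMap R⟦X⟧ S⟦X⟧) := by
    ext p
    rw [RingHom.comp_apply, RingHom.comp_apply, PowerSeries.algebraMap_apply'',
      ← PowerSeries.coeff_zero_eq_constantCoeff_apply,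
      ← PowerSeries.coeff_zero_eq_constantCoeff_apply, PowerSeries.coeff_map]
  rw [Polynomial.aeval_def, Polynomial.eval₂_map, hcomp, ← Polynomial.hom_eval₂,
    ← Polynomial.aeval_def, hQz, map_zero]

theorem isAlgebraic_mk_coeff_succ {z : S⟦X⟧} (hz : IsAlgebraic R⟦X⟧ z) {c : R}
    (hc : algebraMap R S c = PowerSeries.constantCoeff z) :
    IsAlgebraic R⟦X⟧ (PowerSeries.mk fun n ↦ PowerSeries.coeff (n + 1) z) := by
  have hX : IsRegular (PowerSeries.X : R⟦X⟧) :=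
    ⟨PowerSeries.X_mul_injective, PowerSeries.mul_X_injective⟩
  refine isAlgebraic_of_algebraMap_mul_add hX.mem_nonZeroDivisors (PowerSeries.C c) ?_
  rwa [PowerSeries.algebraMap_apply'', PowerSeries.algebraMap_apply'', PowerSeries.map_X,
    PowerSeries.map_C, hc, ← PowerSeries.eq_X_mul_shift_add_const]

theorem coeff_mem_range_of_isAlgebraic
    (halg : ∀ x : S, IsAlgebraic R x → x ∈ (algebraMap R S).range) (n : ℕ) {z : S⟦X⟧}
    (hz : IsAlgebraic R⟦X⟧ z) : PowerSeries.coeff n z ∈ (algebraMap R S).range := by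
  induction n generalizing z with
  | zero => simpa using halg _ (isAlgebraic_constantCoeff hz)
  | succ n ih =>
    obtain ⟨c, hc⟩ := halg _ (isAlgebraic_constantCoeff hz)
    simpa using ih (isAlgebraic_mk_coeff_succ hz hc)

theorem powerSeries_algebraicallyClosedIn
    (halg : ∀ x : S, IsAlgebraic R x → x ∈ (algebraMap R S).range) (z : S⟦X⟧)
    (hz : IsAlgebraic R⟦X⟧ z) : z ∈ (algebraMap R⟦X⟧ S⟦X⟧).range := by
  choose a ha using fun n ↦ coeff_mem_range_of_isAlgebraic halg n hz
  exact ⟨PowerSeries.mk a, PowerSeries.ext fun n ↦ by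
    rw [PowerSeries.algebraMap_apply'', PowerSeries.coeff_map, PowerSeries.coeff_mk, ha]⟩

end PowerSeries

section LaurentSeries

theorem isUnit_hahnSeries_single_one {Γ A : Type*} [AddCommGroup Γ] [PartialOrder Γ]
    [IsOrderedCancelAddMonoid Γ] [CommSemiring A] (g : Γ) :
    IsUnit (HahnSeries.single g 1 : HahnSeries Γ A) :=
  .of_mul_eq_one (HahnSeries.single (-g) 1) (by simp)

variable {R S : Type*} [CommRing R] [CommRing S]

theorem lsMap_single (f : R →+* S) (n : ℤ) (a : R) :
    lsMap f (HahnSeries.single n a) = HahnSeries.single n (f a) :=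
  HahnSeries.map_single f.toMonoidWithZeroHom.toZeroHom

theorem lsMap_ofPowerSeries (f : R →+* S) (p : R⟦X⟧) :
    lsMap f (HahnSeries.ofPowerSeries ℤ R p) =
      HahnSeries.ofPowerSeries ℤ S (PowerSeries.map f p) := by
  ext n
  change f ((HahnSeries.ofPowerSeries ℤ R p).coeff n) = _
  simp only [PowerSeries.coeff_coe, PowerSeries.coeff_map, apply_ite f, map_zero]

theorem laurentSeries_algebraicallyClosedIn_general [Algebra R S]
    (halg : ∀ x : S, IsAlgebraic R x → x ∈ (algebraMap R S).range) :
    letI : Algebra R⸨X⸩ S⸨X⸩ := (lsMap (algebraMap R S)).toAlgebra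
    ∀ z : S⸨X⸩, IsAlgebraic R⸨X⸩ z → z ∈ Set.range (lsMap (algebraMap R S)) := by
  let : Algebra R⸨X⸩ S⸨X⸩ := (lsMap (algebraMap R S)).toAlgebra
  intro z hz
  have : IsScalarTower R⟦X⟧ R⸨X⸩ S⸨X⸩ :=
    .of_algebraMap_eq fun p ↦ (lsMap_ofPowerSeries (algebraMap R S) p).symm
  have : IsScalarTower R⟦X⟧ S⟦X⟧ S⸨X⸩ := .of_algebraMap_eq fun _ ↦ rfl
  have hfactor : lsMap (algebraMap R S) (HahnSeries.single z.order 1) *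
      HahnSeries.ofPowerSeries ℤ S z.powerSeriesPart = z := by
    rw [lsMap_single, map_one, LaurentSeries.single_order_mul_powerSeriesPart]
  have hpart : IsAlgebraic R⸨X⸩ (algebraMap S⟦X⟧ S⸨X⸩ z.powerSeriesPart) := by
    have hunit : IsUnit (HahnSeries.single z.order 1 : R⸨X⸩) :=
      isUnit_hahnSeries_single_one z.order
    refine isAlgebraic_of_algebraMap_mul_add hunit.mem_nonZeroDivisors 0 ?_
    rw [map_zero, add_zero]
    exact hfactor.symm ▸ hz
  obtain ⟨p, hp⟩ := powerSeries_algebraicallyClosedIn halg z.powerSeriesPart <|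
    (isAlgebraic_algebraMap_iff HahnSeries.ofPowerSeries_injective).mp <|
      isAlgebraic_of_isLocalization (.powers (PowerSeries.X : R⟦X⟧)) R⸨X⸩ hpart
  refine ⟨HahnSeries.single z.order 1 * HahnSeries.ofPowerSeries ℤ R p, ?_⟩
  rw [map_mul, lsMap_ofPowerSeries, ← PowerSeries.algebraMap_apply'', hp, hfactor]

end LaurentSeries

/-- If `k₁` is algebraically closed in `k₂`, then `k₁((t))` is algebraically closed
in `k₂((t))`. -/
theorem laurentSeries_algebraicallyClosedIn
    (k₁ k₂ : Type) [Field k₁] [Field k₂] [Algebra k₁ k₂]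
    (halg : ∀ x : k₂, IsAlgebraic k₁ x → x ∈ (algebraMap k₁ k₂).range) :
    letI : Algebra (LaurentSeries k₁) (LaurentSeries k₂) :=
      (lsMap (algebraMap k₁ k₂)).toAlgebra
    ∀ z : LaurentSeries k₂, IsAlgebraic (LaurentSeries k₁) z →
      z ∈ Set.range (lsMap (algebraMap k₁ k₂)) := by
  exact laurentSeries_algebraicallyClosedIn_general halg
end

section
/- Let p be a prime, let D be a discrete valuation ring of characteristic p with maximal ideal 𝔪 and fraction field k₁, let D̂ be the 𝔪-adic completion of D with fraction field k₂, let D' = {y ∈ D̂ : y is algebraic over k₁}, let k₁' be the algebraic closure of k₁ in k₂, and assume the approximation property stated in the context. Let x̄ ∈ D be a uniformizer (a generator of 𝔪), and let ḡ ∈ D̂ be an element not lying in D'. Then for every nonzero e ∈ k₂, the element (ḡ^p + x̄)·e^p does not lie in k₁'. -/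
open IsDedekindDomain IsLocalRing

variable (p : ℕ) (D : Type) [CommRing D] [IsDomain D] [IsDiscreteValuationRing D]
  (v : HeightOneSpectrum D)

/-- `D' = {y ∈ D̂ : y is algebraic over k₁}`, the set of elements of the completed
valuation ring that are algebraic over the fraction field `k₁` of `D`. -/
def Dprime : Set (v.adicCompletionIntegers (FractionRing D)) :=
  {y | IsAlgebraic (FractionRing D) (y : v.adicCompletion (FractionRing D))}

/-- Artin-type approximation property for `D' ⊆ D̂` (a consequence of excellence of
`D`): solutions in `D̂` of polynomial systems over `D'` can be approximated
`𝔪`-adically by solutions in `D'`. -/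
def ApproxProperty : Prop :=
  ∀ f : MvPolynomial (Fin 2) (v.adicCompletionIntegers (FractionRing D)),
    (∀ m, MvPolynomial.coeff m f ∈ Dprime D v) →
    ∀ yhat : Fin 2 → (v.adicCompletionIntegers (FractionRing D)),
      MvPolynomial.eval yhat f = 0 →
      ∀ c : ℕ, 1 ≤ c →
        ∃ y : Fin 2 → (v.adicCompletionIntegers (FractionRing D)),
          (∀ i, y i ∈ Dprime D v) ∧ MvPolynomial.eval y f = 0 ∧
          ∀ i, y i - yhat i ∈
            Ideal.map (algebraMap D (v.adicCompletionIntegers (FractionRing D)))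
              (maximalIdeal D ^ c)

/-!
If `h = (ḡ ^ p + x̄) * e ^ p` were algebraic over `k₁`, then, after scaling `e` into `D̂`, the
polynomial `(Y₁ ^ p + x̄) * Y₂ ^ p - h` over `D'` would have the zero `(ḡ, e)` in `D̂`, hence also
a zero `(a, b)` in `D'`. In characteristic `p` the equality of the two values rearranges to
`(a * b - ḡ * e) ^ p = x̄ * (e - b) ^ p`. Since the value `1` of `x̄` is prime to `p`, `x̄` is not a
`p`-th power in `k₂`; so `b = e`, and then `ḡ = a` lies in `D'`.
-/

/-- Existential closedness of `A` in `B` for single polynomial equations: every polynomial over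
`A` in the variables `σ` with a zero in `B` has a zero in `A`. It is what remains of the
approximation property when the approximation itself is dropped. -/
def SolutionsDescend (σ A B : Type*) [CommRing A] [CommRing B] [Algebra A B] : Prop :=
  ∀ f : MvPolynomial σ A, (∃ y : σ → B, MvPolynomial.aeval y f = 0) →
    ∃ y : σ → A, MvPolynomial.eval y f = 0

/-- The contraction `F ∩ O` to a ring `O` of a subfield `F` of an `O`-algebra `K`. With `O = D̂`
and `F = k₁'` it is the ring `D'`. -/
abbrev contraction (O : Type*) {K : Type*} [CommRing O] [Field K] [Algebra O K]
    (F : Subfield K) : Subring O :=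
  F.toSubring.comap (algebraMap O K)

theorem SolutionsDescend.exists_pow_add_mul_pow_eq {A B : Type*} [CommRing A] [CommRing B]
    [Algebra A B] (hAB : SolutionsDescend (Fin 2) A B) {n : ℕ} {x h : A} {g e : B}
    (hge : (g ^ n + algebraMap A B x) * e ^ n = algebraMap A B h) :
    ∃ a b : A, (a ^ n + x) * b ^ n = h := by
  let f : MvPolynomial (Fin 2) A :=
    (MvPolynomial.X 0 ^ n + MvPolynomial.C x) * MvPolynomial.X 1 ^ n - MvPolynomial.C h
  obtain ⟨y, hy⟩ := hAB f ⟨![g, e], by simp [f, hge]⟩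
  exact ⟨y 0, y 1, by simpa [f, sub_eq_zero] using hy⟩

theorem solutionsDescend_of_forall_coeff_mem {σ B : Type*} [CommRing B] {S : Subring B}
    (hS : ∀ f : MvPolynomial σ B, (∀ m, f.coeff m ∈ S) → ∀ y : σ → B, MvPolynomial.eval y f = 0 →
      ∃ z : σ → B, (∀ i, z i ∈ S) ∧ MvPolynomial.eval z f = 0) :
    SolutionsDescend σ S B := by
  rintro f ⟨y, hy⟩
  have hcoeff (m : σ →₀ ℕ) : (f.map (algebraMap S B)).coeff m ∈ S := by
    rw [MvPolynomial.coeff_map]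
    exact (f.coeff m).2
  obtain ⟨z, hzS, hz⟩ := hS _ hcoeff y (by rwa [MvPolynomial.eval_map])
  lift z to σ → S using hzS
  refine ⟨z, Subtype.ext ?_⟩
  rw [MvPolynomial.eval_map, ← MvPolynomial.aeval_def] at hz
  rw [← MvPolynomial.coe_aeval_eq_eval]
  exact (MvPolynomial.aeval_algebraMap_apply B z f).symm.trans hz

section ApproxProperty

variable {D v}

theorem ApproxProperty.solutionsDescend (hD : ApproxProperty D v) :
    SolutionsDescend (Fin 2)
      (contraction (v.adicCompletionIntegers (FractionRing D))
        (algebraicClosure (FractionRing D) (v.adicCompletion (FractionRing D))).toSubfield)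
      (v.adicCompletionIntegers (FractionRing D)) := by
  refine solutionsDescend_of_forall_coeff_mem fun f hf y hy => ?_
  obtain ⟨z, hzD, hz, -⟩ :=
    hD f (fun m => mem_algebraicClosure_iff.1 (hf m)) y hy 1 le_rfl
  exact ⟨z, fun i => mem_algebraicClosure_iff.2 (hzD i), hz⟩

end ApproxProperty

theorem eq_and_eq_of_pow_add_mul_pow_eq {K : Type*} [Field K] {p : ℕ} [ExpChar K p] {x : K}
    (hx : ∀ w : K, w ^ p ≠ x) {a b g e : K} (he : e ≠ 0)
    (h : (a ^ p + x) * b ^ p = (g ^ p + x) * e ^ p) : a = g ∧ b = e := by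
  have hpow : (a * b - g * e) ^ p = x * (e - b) ^ p := by
    rw [sub_pow_expChar, sub_pow_expChar, mul_pow, mul_pow]
    linear_combination h
  have hbe : b = e := by
    by_contra hne
    have hsub : (e - b) ^ p ≠ 0 := pow_ne_zero p (sub_ne_zero.2 (Ne.symm hne))
    exact hx ((a * b - g * e) / (e - b)) (by rw [div_pow, hpow, mul_div_cancel_right₀ _ hsub])
  subst hbe
  have hag : (a - g) * b = 0 := by
    rw [sub_self, zero_pow (expChar_ne_zero K p), mul_zero, ← sub_mul] at hpow
    exact eq_zero_of_pow_eq_zero hpow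
  exact ⟨sub_eq_zero.1 ((mul_eq_zero.1 hag).resolve_right he), rfl⟩

theorem pow_add_mul_pow_notMem_subfield {O K : Type*} [CommRing O] [Field K] [Algebra O K]
    {p : ℕ} [ExpChar K p] (F : Subfield K)
    (hF : SolutionsDescend (Fin 2) (contraction O F) O)
    (hscale : ∀ e : K, ∃ s ∈ F, s ≠ 0 ∧ ∃ r : O, algebraMap O K r = s * e)
    {x : O} (hxF : algebraMap O K x ∈ F) (hx : ∀ w : K, w ^ p ≠ algebraMap O K x)
    {g : O} (hg : algebraMap O K g ∉ F) {e : K} (he : e ≠ 0) :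
    (algebraMap O K g ^ p + algebraMap O K x) * e ^ p ∉ F := by
  intro hmem
  obtain ⟨s, hsF, hs, r, hr⟩ := hscale e
  have hhF : (g ^ p + x) * r ^ p ∈ contraction O F := by
    have hscaled := F.mul_mem hmem (F.pow_mem hsF p)
    simpa [hr, mul_pow, mul_assoc, mul_comm (e ^ p)] using hscaled
  obtain ⟨a, b, hab⟩ := hF.exists_pow_add_mul_pow_eq (x := ⟨x, hxF⟩) (h := ⟨_, hhF⟩) rfl
  have habK := congrArg (fun c : contraction O F => algebraMap O K c) hab
  have hag : algebraMap O K a = algebraMap O K g := by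
    refine (eq_and_eq_of_pow_add_mul_pow_eq hx (e := s * e) (b := algebraMap O K b)
      (mul_ne_zero hs he) ?_).1
    simpa [hr] using habK
  exact hg (hag ▸ a.2)

section AdicCompletion

theorem dvd_log_pow (a : WithZero (Multiplicative ℤ)) (n : ℕ) :
    (n : ℤ) ∣ WithZero.log (a ^ n) :=
  ⟨WithZero.log a, by simp⟩

variable {R k : Type*} [CommRing R] [IsDedekindDomain R] [Field k] [Algebra R k]
  [IsFractionRing R k] {u : HeightOneSpectrum R}

theorem expChar_adicCompletion (q : ℕ) [ExpChar R q] : ExpChar (u.adicCompletion k) q :=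
  have : ExpChar k q := expChar_of_injective_algebraMap (IsFractionRing.injective R k) q
  expChar_of_injective_algebraMap (algebraMap k _).injective q

theorem not_dvd_log_intValuation {x : R} (hx : u.asIdeal = Ideal.span {x}) {n : ℕ}
    (hn : n ≠ 1) : ¬ (n : ℤ) ∣ WithZero.log (u.intValuation x) := by
  have hx0 : x ≠ 0 := by
    rintro rfl
    exact u.ne_bot (by simpa using hx)
  rw [u.intValuation_singleton hx0 hx, WithZero.log_exp, Int.natCast_dvd]
  simpa using hn

theorem pow_ne_algebraMap_adicCompletion {x : R} {n : ℕ}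
    (hx : ¬ (n : ℤ) ∣ WithZero.log (u.intValuation x)) (w : u.adicCompletion k) :
    w ^ n ≠ algebraMap R (u.adicCompletion k) x := by
  intro hw
  have hval : Valued.v (algebraMap R (u.adicCompletion k) x) = u.intValuation x :=
    (u.valuedAdicCompletion_eq_valuation x).trans (u.valuation_of_algebraMap x)
  rw [← hval, ← hw, map_pow] at hx
  exact hx (dvd_log_pow _ n)

theorem exists_mul_mem_adicCompletionIntegers (F : IntermediateField k (u.adicCompletion k))
    (e : u.adicCompletion k) : ∃ s ∈ F, s ≠ 0 ∧
      ∃ r : u.adicCompletionIntegers k, algebraMap _ (u.adicCompletion k) r = s * e := by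
  obtain ⟨s, hs, hse⟩ :=
    HeightOneSpectrum.adicCompletion.mul_nonZeroDivisor_mem_adicCompletionIntegers u e
  refine ⟨algebraMap k _ (algebraMap R k s), F.algebraMap_mem _, ?_, ⟨_, hse⟩, mul_comm _ _⟩
  simpa using nonZeroDivisors.ne_zero hs

theorem pth_power_class_not_algebraic_general {p : ℕ} [ExpChar R p]
    (hu : SolutionsDescend (Fin 2)
      (contraction (u.adicCompletionIntegers k)
        (algebraicClosure k (u.adicCompletion k)).toSubfield)
      (u.adicCompletionIntegers k))
    {x : R} (hx : ¬ (p : ℤ) ∣ WithZero.log (u.intValuation x))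
    {g : u.adicCompletionIntegers k} (hg : ¬ IsAlgebraic k (g : u.adicCompletion k))
    {e : u.adicCompletion k} (he : e ≠ 0) :
    ((g : u.adicCompletion k) ^ p + algebraMap R (u.adicCompletion k) x) * e ^ p ∉
      algebraicClosure k (u.adicCompletion k) :=
  have : ExpChar (u.adicCompletion k) p := expChar_adicCompletion p
  pow_add_mul_pow_notMem_subfield (algebraicClosure k (u.adicCompletion k)).toSubfield hu
    (exists_mul_mem_adicCompletionIntegers _) (x := algebraMap R _ x)
    ((algebraicClosure _ _).algebraMap_mem (algebraMap R _ x))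
    (pow_ne_algebraMap_adicCompletion hx) (fun h => hg (mem_algebraicClosure_iff.1 h)) he

end AdicCompletion

/-- If `xbar` is a uniformizer of the characteristic `p` discrete valuation ring `D` and
`gbar ∈ D̂` does not lie in `D'`, then for every nonzero `e ∈ k₂ = Frac D̂`, the element
`(gbar^p + xbar)·e^p` does not lie in the algebraic closure `k₁'` of `k₁ = Frac D`
in `k₂`. -/
theorem pth_power_class_not_algebraic
    (hp : p.Prime) [CharP D p] (hv : v.asIdeal = maximalIdeal D)
    (happrox : ApproxProperty D v)
    (xbar : D) (hx : Ideal.span {xbar} = maximalIdeal D)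
    (gbar : v.adicCompletionIntegers (FractionRing D)) (hgbar : gbar ∉ Dprime D v) :
    ∀ e : v.adicCompletion (FractionRing D), e ≠ 0 →
      ((gbar : v.adicCompletion (FractionRing D)) ^ p +
          algebraMap D (v.adicCompletion (FractionRing D)) xbar) * e ^ p ∉
        algebraicClosure (FractionRing D) (v.adicCompletion (FractionRing D)) := by
  have : ExpChar D p := .prime hp
  exact fun _ => pth_power_class_not_algebraic_general happrox.solutionsDescend
    (not_dvd_log_intValuation (hv.trans hx.symm) hp.ne_one) hgbar
end

section
/- Let L ⊆ E be a field extension, let Ω be a separable closure of E, let L^sep be the separable closure of L in Ω, and let φ : Aut_E(Ω) → Aut_L(L^sep) be the restriction homomorphism. Then the image of φ equals the subgroup of Aut_L(L^sep) consisting of those automorphisms that fix pointwise the intermediate field E ∩ L^sep := {a ∈ L^sep : a lies in the image of E in Ω}; in particular, the fixed field of the image of φ is E ∩ L^sep. -/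
variable (L E Ω : Type) [Field L] [Field E] [Field Ω]
  [Algebra L E] [Algebra E Ω] [Algebra L Ω] [IsScalarTower L E Ω]

/-- The restriction homomorphism `Aut_E(Ω) → Aut_L(L^sep)`, where `L^sep` is the
separable closure of `L` in `Ω`. -/
noncomputable def restrictionHom :
    (Ω ≃ₐ[E] Ω) →* (separableClosure L Ω ≃ₐ[L] separableClosure L Ω) where
  toFun σ := separableClosure.algEquivOfAlgEquiv (σ.restrictScalars L)
  map_one' := by
    ext x
    rfl
  map_mul' σ τ := by
    ext x
    rfl

/-- The intermediate field `E ∩ L^sep` of `L^sep/L`. -/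
noncomputable def eCapSep : IntermediateField L (separableClosure L Ω) :=
  IntermediateField.comap (separableClosure L Ω).val
    (IsScalarTower.toAlgHom L E Ω).fieldRange

/-
For an algebraic extension `K/k` the Krull topology on `Gal(K/k)` is the topology of pointwise
convergence, and each `x` has finitely many conjugates, so `Gal(K/k)` is compact. Consequently
`φ` has closed image. If `K/k` is separable, a closed subgroup `H` is the full fixing subgroup of
its fixed field: an automorphism `τ` over that field permutes the roots of the orbit polynomial
`∏ y ∈ H x, (X - y)`, so it agrees with some element of `H` at each `x`, and primitive elements
show that `τ` is in the closure of `H`. It remains to compute the fixed field of the image of `φ`: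
an element of `Ω` separable over `E` and fixed by `Aut_E(Ω)` has no conjugates but itself.
-/

section AlgebraicExtension

open Filter Topology IntermediateField Polynomial

variable {k K : Type*} [Field k] [Field K] [Algebra k K]

theorem krullTopology_mem_nhds_iff_exists_finset [Algebra.IsAlgebraic k K] {τ : Gal(K/k)}
    {U : Set Gal(K/k)} :
    U ∈ 𝓝 τ ↔ ∃ s : Finset K, {σ : Gal(K/k) | ∀ x ∈ s, σ x = τ x} ⊆ U := by
  have fixed_iff (σ : Gal(K/k)) (x : K) : (τ⁻¹ * σ) x = x ↔ σ x = τ x := by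
    rw [AlgEquiv.mul_apply, AlgEquiv.aut_inv, AlgEquiv.symm_apply_eq]
  rw [← mul_one τ, ← map_mul_left_nhds, mul_one, mem_map, krullTopology_mem_nhds_one_iff]
  constructor
  · rintro ⟨M, _, hM⟩
    obtain ⟨s, rfl⟩ := essFiniteType_iff.mp (inferInstance : Algebra.EssFiniteType k M)
    refine ⟨s, fun σ hσ ↦ ?_⟩
    have hmem : τ⁻¹ * σ ∈ (adjoin k (s : Set K)).fixingSubgroup :=
      (mem_fixingSubgroup_iff _ _).mpr <|
        (forall_mem_adjoin_smul_eq_self_iff k (τ⁻¹ * σ)).mpr fun x hx ↦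
          (fixed_iff σ x).mpr (hσ x hx)
    simpa only [Set.mem_preimage, mul_inv_cancel_left] using hM hmem
  · rintro ⟨s, hs⟩
    refine ⟨adjoin k (s : Set K), finiteDimensional_adjoin fun x _ ↦
      Algebra.IsIntegral.isIntegral x, fun σ hσ ↦ hs fun x hx ↦ ?_⟩
    exact congrArg τ ((mem_fixingSubgroup_iff _ _).mp hσ x (subset_adjoin k _ hx))

theorem tendsto_krullTopology_nhds_iff [Algebra.IsAlgebraic k K] {ι : Type*} {l : Filter ι}
    {f : ι → Gal(K/k)} {τ : Gal(K/k)} :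
    Tendsto f l (𝓝 τ) ↔ ∀ x, ∀ᶠ i in l, f i x = τ x := by
  constructor
  · intro hf x
    refine hf.eventually (p := fun σ ↦ σ x = τ x) ?_
    exact krullTopology_mem_nhds_iff_exists_finset.mpr
      ⟨{x}, fun σ hσ ↦ hσ x (Finset.mem_singleton_self x)⟩
  · intro hf U hU
    obtain ⟨s, hs⟩ := krullTopology_mem_nhds_iff_exists_finset.mp hU
    have hs_eventually : ∀ᶠ i in l, ∀ x ∈ s, f i x = τ x :=
      (eventually_all_finset s).mpr fun x _ ↦ hf x
    exact hs_eventually.mono fun i hi ↦ hs hi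

theorem algEquiv_apply_mem_rootSet_minpoly [Algebra.IsAlgebraic k K] (σ : Gal(K/k)) (x : K) :
    σ x ∈ (minpoly k x).rootSet K :=
  (isConjRoot_iff_mem_minpoly_rootSet (Algebra.IsIntegral.isIntegral x)).mp
    (isConjRoot_of_algEquiv x σ)

theorem exists_eventually_apply_eq_of_ultrafilter [Algebra.IsAlgebraic k K]
    (U : Ultrafilter Gal(K/k)) (x : K) : ∃ y, ∀ᶠ σ in (U : Filter Gal(K/k)), σ x = y := by
  have hroot : ∀ᶠ σ : Gal(K/k) in (U : Filter Gal(K/k)), ∃ y ∈ (minpoly k x).rootSet K, σ x = y :=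
    .of_forall fun σ ↦ ⟨σ x, algEquiv_apply_mem_rootSet_minpoly σ x, rfl⟩
  obtain ⟨y, -, hy⟩ := (Ultrafilter.eventually_exists_mem_iff (rootSet_finite _ _)).mp hroot
  exact ⟨y, hy⟩

theorem compactSpace_gal_of_isAlgebraic [Algebra.IsAlgebraic k K] : CompactSpace Gal(K/k) := by
  refine ⟨isCompact_iff_ultrafilter_le_nhds.mpr fun U _ ↦ ?_⟩
  choose φ hφ using exists_eventually_apply_eq_of_ultrafilter U
  let φHom : K →ₐ[k] K :=
    { toFun := φ
      map_one' := by
        obtain ⟨σ, h⟩ := (hφ 1).exists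
        rw [← h, map_one]
      map_mul' x y := by
        obtain ⟨σ, hxy, hx, hy⟩ := ((hφ (x * y)).and ((hφ x).and (hφ y))).exists
        rw [← hxy, ← hx, ← hy, map_mul]
      map_zero' := by
        obtain ⟨σ, h⟩ := (hφ 0).exists
        rw [← h, map_zero]
      map_add' x y := by
        obtain ⟨σ, hxy, hx, hy⟩ := ((hφ (x + y)).and ((hφ x).and (hφ y))).exists
        rw [← hxy, ← hx, ← hy, map_add]
      commutes' c := by
        obtain ⟨σ, h⟩ := (hφ (algebraMap k K c)).exists
        rw [← h, AlgEquiv.commutes] }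
  let τ : Gal(K/k) := AlgEquiv.ofBijective φHom (Algebra.IsAlgebraic.algHom_bijective φHom)
  exact ⟨τ, Set.mem_univ τ, tendsto_id'.mp (tendsto_krullTopology_nhds_iff.mpr hφ)⟩

theorem apply_mem_orbit_of_mem_fixingSubgroup_fixedField [Algebra.IsAlgebraic k K]
    {H : Subgroup Gal(K/k)} {τ : Gal(K/k)} (hτ : τ ∈ (fixedField H).fixingSubgroup) (x : K) :
    τ x ∈ MulAction.orbit H x := by
  have hfin : (MulAction.orbit H x).Finite :=
    ((minpoly k x).rootSet_finite K).subset <| Set.range_subset_iff.mpr fun g ↦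
      algEquiv_apply_mem_rootSet_minpoly (g : Gal(K/k)) x
  let p : K[X] := ∏ y ∈ hfin.toFinset, (X - C y)
  have eval_eq_zero_iff (y : K) : p.eval y = 0 ↔ y ∈ MulAction.orbit H x := by
    simp only [p, eval_prod, eval_sub, eval_X, eval_C, Finset.prod_eq_zero_iff, sub_eq_zero,
      exists_eq_right', Set.Finite.mem_toFinset]
  have map_eq_of_mem (g : H) : p.map (g : K →+* K) = p := by
    rw [Polynomial.map_prod]
    refine Finset.prod_equiv (MulAction.toPerm g) (fun y ↦ ?_) (fun y _ ↦ ?_)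
    · rw [hfin.mem_toFinset, hfin.mem_toFinset, MulAction.toPerm_apply, ← MulAction.orbit_eq_iff,
        ← MulAction.orbit_eq_iff, MulAction.orbit_smul]
    · rw [Polynomial.map_sub, map_X, map_C]
      rfl
  have coeff_mem (n : ℕ) : p.coeff n ∈ fixedField H := fun g ↦ by
    have hcoeff : (p.map (g : K →+* K)).coeff n = p.coeff n := by rw [map_eq_of_mem]
    rw [coeff_map] at hcoeff
    exact hcoeff
  have map_eq : p.map (τ : K →+* K) = p := by
    ext n
    rw [coeff_map]
    exact (mem_fixingSubgroup_iff _ _).mp hτ _ (coeff_mem n)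
  have eval_apply : p.eval (τ x) = τ (p.eval x) := by
    conv_lhs => rw [← map_eq]
    exact eval_map_apply (τ : K →+* K) x
  rw [← eval_eq_zero_iff, eval_apply,
    (eval_eq_zero_iff x).mpr (MulAction.mem_orbit_self x), map_zero]

theorem exists_forall_finset_algEquiv_eq_of_apply_eq [Algebra.IsSeparable k K] (s : Finset K) :
    ∃ α : K, ∀ σ τ : Gal(K/k), σ α = τ α → ∀ x ∈ s, σ x = τ x := by
  have : FiniteDimensional k (adjoin k (s : Set K)) :=
    finiteDimensional_adjoin fun x _ ↦ Algebra.IsIntegral.isIntegral x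
  obtain ⟨α, hα⟩ := Field.exists_primitive_element k (adjoin k (s : Set K))
  refine ⟨α, fun σ τ hστ x hx ↦ ?_⟩
  have hadjoin : adjoin k (s : Set K) = k⟮(α : K)⟯ := by
    rw [← lift_adjoin_simple, hα, IntermediateField.lift_top]
  have hcomp : (σ : K →ₐ[k] K).comp (val _) = (τ : K →ₐ[k] K).comp (val _) :=
    algHom_ext_of_eq_adjoin k hadjoin fun y hy ↦ by
      rw [Set.mem_singleton_iff] at hy
      subst hy
      exact hστ
  exact DFunLike.congr_fun hcomp ⟨x, subset_adjoin k _ hx⟩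

theorem fixingSubgroup_fixedField_eq_topologicalClosure [Algebra.IsSeparable k K]
    (H : Subgroup Gal(K/k)) : (fixedField H).fixingSubgroup = H.topologicalClosure := by
  apply le_antisymm
  · intro τ hτ
    refine mem_closure_iff_nhds.mpr fun U hU ↦ ?_
    obtain ⟨s, hs⟩ := krullTopology_mem_nhds_iff_exists_finset.mp hU
    obtain ⟨α, hα⟩ := exists_forall_finset_algEquiv_eq_of_apply_eq (k := k) s
    obtain ⟨h, hh⟩ := apply_mem_orbit_of_mem_fixingSubgroup_fixedField hτ α
    exact ⟨h, hs (hα h τ hh), h.2⟩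
  · intro τ hτ
    refine (mem_fixingSubgroup_iff _ _).mpr fun x hx ↦ ?_
    have hnhds : {σ : Gal(K/k) | σ x = τ x} ∈ 𝓝 τ :=
      tendsto_krullTopology_nhds_iff.mp tendsto_id x
    obtain ⟨h, hhx, hh⟩ := mem_closure_iff_nhds.mp hτ _ hnhds
    exact hhx.symm.trans (hx ⟨h, hh⟩)

theorem mem_bot_iff_forall_algEquiv_apply_eq_of_isSeparable [Normal k K] {x : K}
    (hx : IsSeparable k x) :
    x ∈ (⊥ : Subalgebra k K) ↔ ∀ σ : Gal(K/k), σ x = x := by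
  rw [← not_iff_not, notMem_iff_exists_ne_and_isConjRoot hx (Normal.splits inferInstance x)]
  push Not
  constructor
  · rintro ⟨y, hne, hconj⟩
    obtain ⟨σ, hσ⟩ := hconj.symm.exists_algEquiv
    exact ⟨σ, hσ.trans_ne hne.symm⟩
  · rintro ⟨σ, hσ⟩
    exact ⟨σ x, hσ.symm, isConjRoot_of_algEquiv x σ⟩

end AlgebraicExtension

theorem restrictionHom_coe_apply (σ : Ω ≃ₐ[E] Ω) (x : separableClosure L Ω) :
    (restrictionHom L E Ω σ x : Ω) = σ x := rfl

theorem continuous_restrictionHom [Algebra.IsAlgebraic E Ω] :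
    Continuous (restrictionHom L E Ω) := by
  refine continuous_iff_continuousAt.mpr fun τ ↦ tendsto_krullTopology_nhds_iff.mpr fun x ↦ ?_
  filter_upwards [tendsto_krullTopology_nhds_iff.mp Filter.tendsto_id (x : Ω)] with σ hσ
  exact Subtype.ext hσ

theorem isClosed_range_restrictionHom [Algebra.IsAlgebraic E Ω] :
    IsClosed ((restrictionHom L E Ω).range : Set Gal(separableClosure L Ω/L)) := by
  have : CompactSpace Gal(Ω/E) := compactSpace_gal_of_isAlgebraic
  rw [MonoidHom.coe_range]
  exact (isCompact_range (continuous_restrictionHom L E Ω)).isClosed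

theorem fixedField_range_restrictionHom [Normal E Ω] :
    IntermediateField.fixedField (restrictionHom L E Ω).range = eCapSep L E Ω := by
  ext x
  have hx : IsSeparable E (x : Ω) := (mem_separableClosure_iff.mp x.2).tower_top E
  calc x ∈ IntermediateField.fixedField (restrictionHom L E Ω).range
      ↔ ∀ σ : Gal(Ω/E), σ x = (x : Ω) := by
        simp only [IntermediateField.mem_fixedField_iff, MonoidHom.mem_range,
          forall_exists_index, forall_apply_eq_imp_iff, Subtype.ext_iff, restrictionHom_coe_apply]
    _ ↔ (x : Ω) ∈ (⊥ : Subalgebra E Ω) :=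
        (mem_bot_iff_forall_algEquiv_apply_eq_of_isSeparable hx).symm
    _ ↔ x ∈ eCapSep L E Ω := Iff.rfl

theorem range_restrictionHom_general [Normal E Ω] :
    (restrictionHom L E Ω).range = (eCapSep L E Ω).fixingSubgroup ∧
    IntermediateField.fixedField (restrictionHom L E Ω).range = eCapSep L E Ω := by
  have hfixed := fixedField_range_restrictionHom L E Ω
  refine ⟨?_, hfixed⟩
  rw [← hfixed, fixingSubgroup_fixedField_eq_topologicalClosure]
  exact le_antisymm (Subgroup.le_topologicalClosure _)
    (Subgroup.topologicalClosure_minimal _ le_rfl (isClosed_range_restrictionHom L E Ω))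

/-- The image of the restriction map `Aut_E(Ω) → Aut_L(L^sep)` is the subgroup fixing
`E ∩ L^sep` pointwise; in particular its fixed field is `E ∩ L^sep`. -/
theorem range_restrictionHom [IsSepClosure E Ω] :
    (restrictionHom L E Ω).range = (eCapSep L E Ω).fixingSubgroup ∧
    IntermediateField.fixedField (restrictionHom L E Ω).range = eCapSep L E Ω := by
  have : IsGalois E Ω := IsSepClosure.isGalois
  exact range_restrictionHom_general L E Ω
end

section
/- Let L ⊆ E be a field extension, let Ω be a separable closure of E, let L^sep be the separable closure of L in Ω, and let φ : Aut_E(Ω) → Aut_L(L^sep) be the restriction homomorphism. Then φ is injective if and only if the compositum inside Ω of (the image of) E and L^sep is all of Ω, i.e., Ω is generated as a field by E together with L^sep. -/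
variable (L E Ω : Type) [Field L] [Field E] [Field Ω]
  [Algebra L E] [Algebra E Ω] [Algebra L Ω] [IsScalarTower L E Ω]

/-!
An element of `Aut_E(Ω)` restricts to the identity on `L^sep` exactly when it fixes the field
`E(L^sep)` generated by `E` and `L^sep`. Thus the kernel of restriction is `Gal(Ω/E(L^sep))`,
and since `Ω/E` is Galois, the Galois correspondence makes this group trivial exactly when
`E(L^sep) = Ω`.
-/

open IntermediateField

theorem fixingSubgroup_eq_bot_iff {F K : Type*} [Field F] [Field K] [Algebra F K] [IsGalois F K]
    {M : IntermediateField F K} : M.fixingSubgroup = ⊥ ↔ M = ⊤ where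
  mp h := by rw [← InfiniteGalois.fixedField_fixingSubgroup M, h, fixedField_bot]
  mpr h := by rw [h, fixingSubgroup_top]

section Compositum

variable {F M K : Type*} [Field F] [Field M] [Field K]
  [Algebra F M] [Algebra M K] [Algebra F K] [IsScalarTower F M K]

theorem restrictScalars_adjoin_eq_fieldRange_sup (S : Set K) :
    (adjoin M S).restrictScalars F = (IsScalarTower.toAlgHom F M K).fieldRange ⊔ adjoin F S := by
  rw [← restrictScalars_adjoin_eq_sup]
  exact restrictScalars_adjoin_of_algEquiv
    (AlgEquiv.ofInjectiveField (IsScalarTower.toAlgHom F M K)) rfl S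

theorem adjoin_eq_top_iff_fieldRange_sup_eq_top (N : IntermediateField F K) :
    adjoin M (N : Set K) = ⊤ ↔ (IsScalarTower.toAlgHom F M K).fieldRange ⊔ N = ⊤ := by
  rw [← restrictScalars_eq_top_iff (K := F), restrictScalars_adjoin_eq_fieldRange_sup, adjoin_self]

end Compositum

theorem mem_ker_restrictionHom_iff {σ : Ω ≃ₐ[E] Ω} :
    σ ∈ (restrictionHom L E Ω).ker ↔ ∀ x ∈ separableClosure L Ω, σ x = x := by
  rw [MonoidHom.mem_ker, AlgEquiv.ext_iff, Subtype.forall]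
  exact forall₂_congr fun _ _ ↦ Subtype.ext_iff

theorem ker_restrictionHom :
    (restrictionHom L E Ω).ker = (adjoin E (separableClosure L Ω : Set Ω)).fixingSubgroup := by
  ext σ
  rw [mem_ker_restrictionHom_iff, IntermediateField.mem_fixingSubgroup_iff]
  exact (forall_mem_adjoin_smul_eq_self_iff E σ).symm

theorem injective_restrictionHom_iff_general [IsGalois E Ω] :
    Function.Injective (restrictionHom L E Ω) ↔
      (IsScalarTower.toAlgHom L E Ω).fieldRange ⊔ separableClosure L Ω = ⊤ := by
  rw [← MonoidHom.ker_eq_bot_iff, ker_restrictionHom, fixingSubgroup_eq_bot_iff,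
    adjoin_eq_top_iff_fieldRange_sup_eq_top]

/-- The restriction map `Aut_E(Ω) → Aut_L(L^sep)` is injective if and only if `Ω` is the
compositum of (the image of) `E` and `L^sep`. -/
theorem injective_restrictionHom_iff [IsSepClosure E Ω] :
    Function.Injective (restrictionHom L E Ω) ↔
      (IsScalarTower.toAlgHom L E Ω).fieldRange ⊔ separableClosure L Ω = ⊤ :=
  have : IsGalois E Ω := IsSepClosure.isGalois
  injective_restrictionHom_iff_general L E Ω
end

section
/- Let L ⊆ E be a field extension, let Ω be a separable closure of E, let L^sep be the separable closure of L in Ω, and let φ : Aut_E(Ω) → Aut_L(L^sep) be the restriction homomorphism. Then φ is surjective if and only if L is separably closed in E, i.e., every element of E that is separable algebraic over L lies in the image of L. -/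
/-!
Forward, an element of `E` separable over `L` is fixed by every `E`-automorphism of `Ω`, hence, by
surjectivity, by all of `Aut_L(L^sep)`, so it lies in `L`.

Conversely, let `L` be separably closed in `E`. The minimal polynomial over `E` of an element
separable over `L` has coefficients separable over `L`, hence in `L`; so separable minimal
polynomials over `L` stay irreducible over `E`, which makes `L^sep` and `E` linearly disjoint
over `L`. Then `E ⊗[L] L^sep` is a subfield of `Ω`, to which an automorphism of `L^sep` extends by
acting on the second factor, and from there it extends to the normal extension `Ω / E`.
-/

variable (L E Ω : Type) [Field L] [Field E] [Field Ω]
  [Algebra L E] [Algebra E Ω] [Algebra L Ω] [IsScalarTower L E Ω]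

section LinearDisjoint

open Polynomial IntermediateField TensorProduct

section

variable {F K : Type*} [Field F] [Field K] [Algebra F K]

theorem separableClosure_eq_bot_iff :
    separableClosure F K = ⊥ ↔
      ∀ x : K, IsAlgebraic F x → IsSeparable F x → x ∈ (algebraMap F K).range := by
  rw [eq_bot_iff]
  exact ⟨fun h x _ hx ↦ h (mem_separableClosure_iff.2 hx), fun h x hx ↦
    have hx := mem_separableClosure_iff.1 hx
    h x hx.isIntegral.isAlgebraic hx⟩

theorem isSeparable_coeff_of_dvd_map {p : F[X]} {q : K[X]} (hp : p.Separable) (hq : q.Monic)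
    (hqp : q ∣ p.map (algebraMap F K)) (n : ℕ) : IsSeparable F (q.coeff n) := by
  let C := AlgebraicClosure K
  have hroots : ∀ a ∈ (q.map (algebraMap K C)).roots,
      a ∈ (algebraMap (separableClosure F C) C).range := fun a ha ↦ by
    have hqa : aeval a q = 0 := by
      rw [aeval_def, eval₂_eq_eval_map]
      exact isRoot_of_mem_roots ha
    have hpa : aeval a p = 0 := by
      rw [← aeval_map_algebraMap K]
      exact aeval_eq_zero_of_dvd_aeval_eq_zero hqp hqa
    exact ⟨⟨a, mem_separableClosure_iff.2 (hp.of_dvd (minpoly.dvd F a hpa))⟩, rfl⟩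
  have hlifts := (IsAlgClosed.splits _).mem_lift_of_roots_mem_range (hq.map (algebraMap K C)) _
    hroots
  obtain ⟨c, hc⟩ := (lifts_iff_coeff_lifts _).1 hlifts n
  rw [coeff_map] at hc
  rw [← mem_separableClosure_iff,
    ← map_mem_separableClosure_iff (IsScalarTower.toAlgHom F K C)]
  exact hc ▸ c.2

end

variable {F K M : Type*} [Field F] [Field K] [Field M]
  [Algebra F K] [Algebra K M] [Algebra F M] [IsScalarTower F K M]

theorem minpoly_map_of_separableClosure_eq_bot (hF : separableClosure F K = ⊥) {x : M}
    (hx : IsSeparable F x) : (minpoly F x).map (algebraMap F K) = minpoly K x := by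
  refine minpoly.map_algebraMap hx.isIntegral ((lifts_iff_coeff_lifts _).2 fun n ↦ ?_)
  rw [← mem_bot, ← hF, mem_separableClosure_iff]
  exact isSeparable_coeff_of_dvd_map hx (minpoly.monic hx.isIntegral.tower_top)
    (minpoly.dvd_map_of_isScalarTower F K x) n

theorem linearDisjoint_adjoin_simple_of_separableClosure_eq_bot (hF : separableClosure F K = ⊥)
    {x : M} (hx : IsSeparable F x) : F⟮x⟯.LinearDisjoint K := by
  have hdeg : (minpoly F x).natDegree = (minpoly K x).natDegree := by
    rw [← minpoly_map_of_separableClosure_eq_bot hF hx, natDegree_map]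
  refine LinearDisjoint.of_basis_left (adjoin.powerBasis hx.isIntegral).basis ?_
  convert! (linearIndependent_pow (K := K) x).comp (finCongr hdeg) (finCongr hdeg).injective
  exact funext fun i ↦ by rw [PowerBasis.coe_basis, adjoin.powerBasis_gen]; rfl

theorem exists_adjoin_simple_eq_adjoin_of_isSeparable {s : Set M} (hs : s.Finite)
    (hsep : ∀ x ∈ s, IsSeparable F x) : ∃ x : M, F⟮x⟯ = adjoin F s := by
  have : Finite s := hs
  have : Algebra.IsSeparable F (adjoin F s) := (isSeparable_adjoin_iff_isSeparable F M).2 hsep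
  have : FiniteDimensional F (adjoin F s) :=
    finiteDimensional_adjoin fun x hx ↦ (hsep x hx).isIntegral
  obtain ⟨x, hx⟩ := Field.exists_primitive_element F (adjoin F s)
  exact ⟨x, by rw [← lift_adjoin_simple, hx, lift_top]⟩

theorem linearDisjoint_of_forall_adjoin_simple {A : IntermediateField F M}
    [Algebra.IsSeparable F A] (h : ∀ x ∈ A, F⟮x⟯.LinearDisjoint K) : A.LinearDisjoint K := by
  refine Submodule.LinearDisjoint.of_linearDisjoint_fg_left _ _ fun N hNA ⟨s, hs⟩ ↦ ?_
  have hsA : (s : Set M) ⊆ A := (hs ▸ Submodule.subset_span : (s : Set M) ⊆ N).trans hNA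
  obtain ⟨x, hx⟩ := exists_adjoin_simple_eq_adjoin_of_isSeparable (F := F) s.finite_toSet
    fun y hy ↦ isSeparable_of_mem_isSeparable F M (hsA hy)
  have hxA : x ∈ A := adjoin_simple_le_iff.1 (hx ▸ adjoin_le_iff.2 hsA)
  refine Submodule.LinearDisjoint.of_le_left_of_flat (h x hxA) ?_
  rw [← hs, Submodule.span_le, hx]
  exact subset_adjoin F _

theorem exists_algEquiv_extending_of_linearDisjoint {A : IntermediateField F M}
    [Algebra.IsAlgebraic F A] [Normal K M] (hA : A.LinearDisjoint K) (τ : A ≃ₐ[F] A) :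
    ∃ σ : M ≃ₐ[K] M, ∀ x : A, σ x = τ x := by
  let _ : Field (K ⊗[F] A) :=
    ((Algebra.TensorProduct.comm F K A).toMulEquiv.isField
      (hA.isField_of_isAlgebraic (.inl ‹_›))).toField
  let i : K ⊗[F] A →ₐ[K] M :=
    Algebra.TensorProduct.lift (Algebra.ofId K M) A.val fun _ _ ↦ .all _ _
  let _ : Algebra (K ⊗[F] A) M := i.toAlgebra
  have : IsScalarTower K (K ⊗[F] A) M := .of_algebraMap_eq' i.comp_algebraMap.symm
  let σ := (Algebra.TensorProduct.congr (AlgEquiv.refl : K ≃ₐ[K] K) τ).liftNormal M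
  have hi (x : A) : algebraMap (K ⊗[F] A) M (1 ⊗ₜ x) = x := by
    change i _ = x
    simp [i]
  refine ⟨σ, fun x ↦ ?_⟩
  rw [← hi, AlgEquiv.liftNormal_commutes, ← hi]
  simp

end LinearDisjoint

theorem coe_restrictionHom (σ : Ω ≃ₐ[E] Ω) (x : separableClosure L Ω) :
    ((restrictionHom L E Ω σ x : separableClosure L Ω) : Ω) = σ x := rfl

theorem surjective_restrictionHom_of_separableClosure_eq_bot [Normal E Ω]
    (h : separableClosure L E = ⊥) : Function.Surjective (restrictionHom L E Ω) := fun τ ↦ by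
  have hdisj : (separableClosure L Ω).LinearDisjoint E :=
    linearDisjoint_of_forall_adjoin_simple fun _ hx ↦
      linearDisjoint_adjoin_simple_of_separableClosure_eq_bot h (mem_separableClosure_iff.1 hx)
  obtain ⟨σ, hσ⟩ := exists_algEquiv_extending_of_linearDisjoint hdisj τ
  exact ⟨σ, AlgEquiv.ext fun x ↦ Subtype.ext ((coe_restrictionHom L E Ω σ x).trans (hσ x))⟩

theorem separableClosure_eq_bot_of_surjective_restrictionHom [IsGalois L (separableClosure L Ω)]
    (h : Function.Surjective (restrictionHom L E Ω)) : separableClosure L E = ⊥ := by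
  refine eq_bot_iff.2 fun x hx ↦ ?_
  let x' : separableClosure L Ω :=
    ⟨algebraMap E Ω x, (map_mem_separableClosure_iff (IsScalarTower.toAlgHom L E Ω)).2 hx⟩
  have hfixed (τ : separableClosure L Ω ≃ₐ[L] separableClosure L Ω) : τ x' = x' := by
    obtain ⟨σ, rfl⟩ := h τ
    exact Subtype.ext ((coe_restrictionHom L E Ω σ x').trans (σ.commutes x))
  obtain ⟨y, hy⟩ := (InfiniteGalois.mem_range_algebraMap_iff_fixed x').2 hfixed
  refine ⟨y, (algebraMap E Ω).injective ?_⟩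
  exact (IsScalarTower.algebraMap_apply L E Ω y).symm.trans (congrArg Subtype.val hy)

theorem surjective_restrictionHom_iff_general [Normal E Ω] [IsGalois L (separableClosure L Ω)] :
    Function.Surjective (restrictionHom L E Ω) ↔
      ∀ x : E, IsAlgebraic L x → IsSeparable L x → x ∈ (algebraMap L E).range :=
  Iff.trans ⟨separableClosure_eq_bot_of_surjective_restrictionHom L E Ω,
    surjective_restrictionHom_of_separableClosure_eq_bot L E Ω⟩ separableClosure_eq_bot_iff

/-- The restriction map `Aut_E(Ω) → Aut_L(L^sep)` is surjective if and only if `L` is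
separably closed in `E`. -/
theorem surjective_restrictionHom_iff [IsSepClosure E Ω] :
    Function.Surjective (restrictionHom L E Ω) ↔
      ∀ x : E, IsAlgebraic L x → IsSeparable L x → x ∈ (algebraMap L E).range := by
  have : IsSepClosed Ω := IsSepClosure.sep_closed E
  have : IsGalois E Ω := inferInstance
  exact surjective_restrictionHom_iff_general L E Ω
end
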